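/- For every integer α ≥ 1, in the d_5 tower, L_{2α} ≡ 2^{2α−1}·7·t (mod 49) and L_{2α+1} ≡ 2^{2α−2}·35·(p_0 + p_1)·t^3 (mod 49), where congruence of Laurent series means all corresponding coefficients are congruent. In particular the coefficient of t in L_{2α} and the coefficient of (p_0+p_1)t^3 in L_{2α+1} are not divisible by 49. -/

import Mathlib

noncomputable section

/-- `J b = ∏_{k=1}^∞ (1 - q^{b·k})` as a formal power series with integer coefficients. -/
def J (b : ℕ) : PowerSeries ℤ :=
  PowerSeries.mk fun n =>
    PowerSeries.coeff n
      (∏ k ∈ Finset.range (n + 1), (1 - (PowerSeries.X : PowerSeries ℤ) ^ (b * (k + 1))))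

/-!
Modulo 7 the weight 6 Eisenstein series is 1, so forms of level 2 whose weights differ by a multiple
of 6 can coincide, and all series of the tower become Laurent polynomials in the single series
`eis = 2 E₂(q²) - E₂(q)`. This is derived from theta series: `J₁`, `J₁³` and `J₁⁵ / J₂²` are sums
over quadratic exponents, Fermat's little theorem turns these sums into linear differential
equations for `θ = q d/dq`, and the associated Riccati equations express `E₂ = E₄²`, `Δ(q)` and
`Δ(q²)` through `eis`. As `U₇` pulls out seventh powers and kills the image of `θ`, and `θ eis` is
a Laurent polynomial in `eis`, the operator can be computed on powers of `eis`. With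
`A₅`, `t ≡ Δ` and `v = (p₀ + p₁) t³` read modulo 7, this gives `U₇ (A₅ Δ) = 6 v` and `U₇ v = 3 Δ`,
a factor `18 ≡ 4` for every two steps of the tower.

The first step needs `A₅` modulo 49. Modulo 49, `J₁⁷ ≡ J₇ (1 - 7 ∑ σ₅(n) qⁿ)`, which splits `A₅`
into a series in `q⁷`, the theta series `q¹² J₁⁵ / J₂²` and a factor `1 + 7 (…)`. Completing the
square shows that `U₇` makes the theta series divisible by 7, and the contribution of the divisor
sums is evaluated modulo 7 by integration by parts with respect to `θ`.
-/

namespace EtaTower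

open PowerSeries Finset
open scoped PowerSeries.WithPiTopology

/-! ### The finite Jacobi triple product -/

section GaussBinom

variable {R : Type*} [CommRing R]

/-- The Gaussian binomial coefficient, defined by the `q`-Pascal recursion so that it makes sense
for every element `q` of a commutative ring. -/
def gaussBinom (q : R) : ℕ → ℕ → R
  | _, 0 => 1
  | 0, _ + 1 => 0
  | n + 1, k + 1 => q ^ (k + 1) * gaussBinom q n (k + 1) + gaussBinom q n k

/-- The finite `q`-Pochhammer symbol `(q; q)_n`. -/
def qPochhammer (q : R) (n : ℕ) : R :=
  ∏ k ∈ range n, (1 - q ^ (k + 1))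

theorem qPochhammer_succ (q : R) (n : ℕ) :
    qPochhammer q (n + 1) = qPochhammer q n * (1 - q ^ (n + 1)) :=
  prod_range_succ _ _

theorem gaussBinom_zero_right (q : R) (n : ℕ) : gaussBinom q n 0 = 1 := by
  cases n <;> rfl

theorem gaussBinom_eq_zero_of_lt (q : R) {n k : ℕ} (h : n < k) : gaussBinom q n k = 0 := by
  induction n generalizing k with
  | zero => obtain ⟨k, rfl⟩ := Nat.exists_eq_add_of_lt h; simp [gaussBinom]
  | succ n ih =>
    obtain ⟨k, rfl⟩ := Nat.exists_eq_succ_of_ne_zero (Nat.ne_zero_of_lt h)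
    rw [gaussBinom, ih (by omega), ih (by omega), mul_zero, add_zero]

theorem gaussBinom_self (q : R) (n : ℕ) : gaussBinom q n n = 1 := by
  induction n with
  | zero => rfl
  | succ n ih => rw [gaussBinom, ih, gaussBinom_eq_zero_of_lt q n.lt_succ_self, mul_zero, zero_add]

theorem map_gaussBinom {S : Type*} [CommRing S] (f : R →+* S) (q : R) (n k : ℕ) :
    f (gaussBinom q n k) = gaussBinom (f q) n k := by
  induction n generalizing k with
  | zero => cases k <;> simp [gaussBinom]
  | succ n ih => cases k <;> simp [gaussBinom, ih]

theorem gaussBinom_mul_qPochhammer (q : R) (k l : ℕ) :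
    gaussBinom q (k + l) k * qPochhammer q k * qPochhammer q l = qPochhammer q (k + l) := by
  induction k generalizing l with
  | zero => simp [gaussBinom_zero_right, qPochhammer]
  | succ k ih_k =>
    induction l with
    | zero => simp [gaussBinom_self, qPochhammer]
    | succ l ih_l =>
      have hk := ih_k (l + 1)
      rw [← add_assoc, qPochhammer_succ q l] at hk
      rw [add_right_comm, qPochhammer_succ q k] at ih_l
      rw [show k + 1 + (l + 1) = k + l + 1 + 1 by ring, gaussBinom, qPochhammer_succ q k,
        qPochhammer_succ q l, qPochhammer_succ q (k + l + 1)]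
      linear_combination q ^ (k + 1) * (1 - q ^ (l + 1)) * ih_l + (1 - q ^ (k + 1)) * hk

theorem prod_add_mul_pow_eq_sum_gaussBinom (q x y : R) (n : ℕ) :
    ∏ i ∈ range n, (y + x * q ^ i) =
      ∑ k ∈ range (n + 1), q ^ k.choose 2 * gaussBinom q n k * x ^ k * y ^ (n - k) := by
  induction n generalizing x with
  | zero => simp [gaussBinom]
  | succ n ih =>
    have choose_two_succ (k : ℕ) : (k + 1).choose 2 = k.choose 2 + k := by
      rw [Nat.choose_succ_succ', Nat.choose_one_right, add_comm]
    have terms_y : ∑ k ∈ range (n + 1),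
          q ^ k.choose 2 * gaussBinom q n k * (x * q) ^ k * y ^ (n - k) * y =
        ∑ k ∈ range (n + 1), q ^ (k + 1).choose 2 * (q ^ (k + 1) * gaussBinom q n (k + 1)) *
          x ^ (k + 1) * y ^ (n - k) + y ^ (n + 1) := by
      rw [sum_range_succ', sum_range_succ, gaussBinom_eq_zero_of_lt q n.lt_succ_self]
      simp only [mul_zero, zero_mul, add_zero, gaussBinom_zero_right, Nat.choose_zero_succ,
        pow_zero, mul_one, one_mul, Nat.sub_zero, ← pow_succ]
      refine congrArg (· + _) (sum_congr rfl fun k hk => ?_)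
      rw [show n - k = n - (k + 1) + 1 by have := mem_range.1 hk; omega]
      ring
    have terms_x : ∑ k ∈ range (n + 1),
          q ^ k.choose 2 * gaussBinom q n k * (x * q) ^ k * y ^ (n - k) * x =
        ∑ k ∈ range (n + 1), q ^ (k + 1).choose 2 * gaussBinom q n k * x ^ (k + 1) *
          y ^ (n - k) := by
      refine sum_congr rfl fun k _ => ?_
      rw [choose_two_succ]
      ring
    calc ∏ i ∈ range (n + 1), (y + x * q ^ i)
        = (∏ i ∈ range n, (y + x * q * q ^ i)) * (y + x) := by
          rw [prod_range_succ', pow_zero, mul_one]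
          simp only [pow_succ', mul_assoc]
      _ = _ := by
          rw [ih, mul_add, sum_mul, sum_mul, terms_y, terms_x, add_right_comm, ← sum_add_distrib,
            sum_range_succ' _ (n + 1)]
          simp only [gaussBinom, Nat.choose_zero_succ, pow_zero, mul_one, one_mul, Nat.sub_zero,
            Nat.add_sub_add_right, mul_add, add_mul]

/-- The triangular exponent `m (m - 1) / 2` of an integer `m`. -/
def triangle (m : ℤ) : ℕ := (m * (m - 1) / 2).toNat

theorem two_mul_natCast_triangle (m : ℤ) : 2 * (triangle m : ℤ) = m * (m - 1) := by
  have nonneg : 0 ≤ m * (m - 1) := by rcases le_or_gt m 0 with h | h <;> nlinarith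
  have even := (Int.even_mul_pred_self m).two_dvd
  rw [triangle]
  omega

theorem abs_le_triangle_add_one (m : ℤ) : |m| ≤ triangle m + 1 := by
  have h := two_mul_natCast_triangle m
  rw [abs_le]
  constructor <;> nlinarith [sq_nonneg (m + 1), sq_nonneg (m - 1), sq_nonneg (m - 2)]

theorem negOnePow_natCast_sub (k m : ℕ) :
    ((((k : ℤ) - m).negOnePow : ℤ) : R) = (-1) ^ k * (-1) ^ m := by
  rw [Int.negOnePow_sub, Int.negOnePow_def, Int.negOnePow_def]
  simp

theorem prod_range_sub_mul_pow (q x y : R) (m : ℕ) :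
    ∏ i ∈ range m, (y * q ^ m - x * q ^ i) =
      (-1) ^ m * q ^ m.choose 2 * ∏ i ∈ range m, (x - y * q ^ (i + 1)) := by
  have exponents : ∏ i ∈ range m, q ^ i = q ^ m.choose 2 := by
    rw [prod_pow_eq_pow_sum, sum_range_id, Nat.choose_two_right]
  rw [← prod_range_reflect (fun i => x - y * q ^ (i + 1)), ← exponents,
    show (-1 : R) ^ m = ∏ _i ∈ range m, (-1) by simp, ← prod_mul_distrib, ← prod_mul_distrib]
  refine prod_congr rfl fun i hi => ?_
  obtain ⟨l, rfl⟩ := Nat.exists_eq_add_of_lt (mem_range.1 hi)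
  rw [show i + l + 1 - 1 - i = l by omega]
  ring

theorem triangle_natCast_sub (m n k : ℕ) (hk : k ≤ m + n) :
    m.choose 2 + m * n + triangle (k - m) = k.choose 2 + m * (m + n - k) := by
  obtain ⟨l, hl⟩ := Nat.exists_eq_add_of_le hk
  have two_mul_choose (j : ℕ) : 2 * (j.choose 2 : ℤ) = j * (j - 1) := by
    induction j with
    | zero => simp
    | succ j ih => rw [Nat.choose_succ_succ', Nat.choose_one_right]; push_cast; linarith
  have h := two_mul_natCast_triangle (k - m)
  rw [hl, Nat.add_sub_cancel_left]
  zify at hl ⊢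
  apply mul_left_cancel₀ (two_ne_zero (α := ℤ))
  linear_combination h + two_mul_choose m - two_mul_choose k + 2 * m * hl

theorem finite_jacobi_triple_product [IsDomain R] {q : R} (hq : q ≠ 0) (x y : R) (m n : ℕ) :
    (∏ i ∈ range m, (x - y * q ^ (i + 1))) * ∏ i ∈ range n, (y - x * q ^ i) =
      ∑ k ∈ range (m + n + 1), (((k : ℤ) - m).negOnePow : ℤ) * q ^ triangle (k - m) *
        gaussBinom q (m + n) k * x ^ k * y ^ (m + n - k) := by
  have hc : (-1) ^ m * q ^ (m.choose 2 + m * n) ≠ 0 := by simp [hq]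
  apply mul_left_cancel₀ hc
  have binomial := prod_add_mul_pow_eq_sum_gaussBinom q (-x) (y * q ^ m) (m + n)
  simp only [neg_mul, ← sub_eq_add_neg] at binomial
  have upper_factors : ∏ i ∈ range n, (y * q ^ m - x * q ^ (m + i)) =
      q ^ (m * n) * ∏ i ∈ range n, (y - x * q ^ i) := by
    rw [show q ^ (m * n) = ∏ _i ∈ range n, q ^ m by simp [pow_mul], ← prod_mul_distrib]
    exact prod_congr rfl fun i _ => by ring
  rw [prod_range_add, prod_range_sub_mul_pow, upper_factors] at binomial
  trans ∑ k ∈ range (m + n + 1),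
    q ^ k.choose 2 * gaussBinom q (m + n) k * (-x) ^ k * (y * q ^ m) ^ (m + n - k)
  · rw [← binomial]
    ring
  · rw [mul_sum]
    refine sum_congr rfl fun k hk => ?_
    have exponents := congrArg (q ^ ·) (triangle_natCast_sub m n k (by grind))
    have sign : (-1 : R) ^ m * (-1) ^ m = 1 := by rw [← mul_pow]; simp
    simp only [pow_add, pow_mul] at exponents
    rw [negOnePow_natCast_sub, neg_pow x, mul_pow, pow_add, pow_mul]
    linear_combination -gaussBinom q (m + n) k * x ^ k * y ^ (m + n - k) * (-1) ^ k * (exponents +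
      q ^ m.choose 2 * (q ^ m) ^ n * q ^ triangle (k - m) * sign)

end GaussBinom

/-! ### Theta series of Gauss and Jacobi -/

theorem eq_of_forall_X_pow_dvd_sub {R : Type*} [CommRing R] {f g : R⟦X⟧}
    (h : ∀ n, X ^ (n + 1) ∣ f - g) : f = g := by
  ext d
  rw [← sub_eq_zero, ← map_sub]
  exact X_pow_dvd_iff.1 (h d) d d.lt_succ_self

theorem X_pow_dvd_expand {R : Type*} [CommRing R] {c : ℕ} (hc : c ≠ 0) {n : ℕ} {f : R⟦X⟧}
    (h : X ^ n ∣ f) : X ^ n ∣ expand c hc f := by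
  have hdvd := map_dvd (expand c hc) h
  rw [map_pow, expand_X, ← pow_mul] at hdvd
  exact (pow_dvd_pow _ (Nat.le_mul_of_pos_left n hc.bot_lt)).trans hdvd

theorem X_pow_dvd_qPochhammer_sub {b : ℕ} (hb : b ≠ 0) {n m : ℕ} (h : n ≤ m) :
    (X : ℤ⟦X⟧) ^ (n + 1) ∣ qPochhammer (X ^ b) m - qPochhammer (X ^ b) n := by
  induction m, h using Nat.le_induction with
  | base => simp
  | succ m hm ih =>
    rw [qPochhammer_succ, mul_one_sub, sub_right_comm, ← pow_mul]
    refine dvd_sub ih (Dvd.dvd.mul_left (pow_dvd_pow _ ?_) _)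
    calc n + 1 ≤ m + 1 := by omega
      _ ≤ b * (m + 1) := Nat.le_mul_of_pos_left _ hb.bot_lt

theorem X_pow_dvd_J_sub_qPochhammer {b : ℕ} (hb : b ≠ 0) {n m : ℕ} (h : n ≤ m) :
    (X : ℤ⟦X⟧) ^ (n + 1) ∣ J b - qPochhammer (X ^ b) m := by
  rw [X_pow_dvd_iff]
  intro d hd
  have coeff_J : coeff d (J b) = coeff d (qPochhammer (X ^ b : ℤ⟦X⟧) (d + 1)) := by
    simp [J, qPochhammer, pow_mul]
  have coeff_eq {m : ℕ} (hm : d ≤ m) :=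
    X_pow_dvd_iff.1 (X_pow_dvd_qPochhammer_sub hb hm) d d.lt_succ_self
  have hsucc := coeff_eq d.le_succ
  have hm := coeff_eq (m := m) (by omega)
  rw [map_sub] at hsucc hm ⊢
  linarith

theorem constantCoeff_J {b : ℕ} (hb : b ≠ 0) : constantCoeff (J b) = 1 := by
  simp [J, hb]

theorem isUnit_J {b : ℕ} (hb : b ≠ 0) : IsUnit (J b) := by
  simp [isUnit_iff_constantCoeff, constantCoeff_J hb]

theorem expand_J {b c : ℕ} (hb : b ≠ 0) (hc : c ≠ 0) : expand c hc (J b) = J (c * b) := by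
  refine eq_of_forall_X_pow_dvd_sub fun n => ?_
  have hexpand := X_pow_dvd_expand hc (X_pow_dvd_J_sub_qPochhammer hb n.le_refl)
  have expand_qPochhammer :
      expand c hc (qPochhammer (X ^ b : ℤ⟦X⟧) n) = qPochhammer (X ^ (c * b)) n := by
    simp [qPochhammer, expand_X, pow_mul]
  rw [map_sub, expand_qPochhammer] at hexpand
  simpa using dvd_sub hexpand (X_pow_dvd_J_sub_qPochhammer (mul_ne_zero hc hb) n.le_refl)

theorem X_pow_dvd_gaussBinom_mul_J_sub_one {b : ℕ} (hb : b ≠ 0) {k l d : ℕ} (hk : d ≤ k)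
    (hl : d ≤ l) : (X : ℤ⟦X⟧) ^ (d + 1) ∣ gaussBinom (X ^ b) (k + l) k * J b - 1 := by
  rw [← (isUnit_J hb).dvd_mul_right]
  have decomposition : (gaussBinom (X ^ b) (k + l) k * J b - 1) * J b =
      gaussBinom (X ^ b) (k + l) k * J b * (J b - qPochhammer (X ^ b) l) +
        gaussBinom (X ^ b) (k + l) k * qPochhammer (X ^ b) l * (J b - qPochhammer (X ^ b) k) -
        (J b - qPochhammer (X ^ b) (k + l)) := by
    linear_combination gaussBinom_mul_qPochhammer (X ^ b : ℤ⟦X⟧) k l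
  rw [decomposition]
  exact dvd_sub (dvd_add (Dvd.dvd.mul_left (X_pow_dvd_J_sub_qPochhammer hb hl) _)
    (Dvd.dvd.mul_left (X_pow_dvd_J_sub_qPochhammer hb hk) _))
    (X_pow_dvd_J_sub_qPochhammer hb (by omega))

theorem X_pow_dvd_monomial {R : Type*} [CommRing R] {d e : ℕ} (h : d ≤ e) (c : R) :
    X ^ d ∣ monomial e c := by
  rw [X_pow_dvd_iff]
  intro m hm
  rw [coeff_monomial, if_neg (by omega)]

section ThetaLimit

variable {b : ℕ} {c : ℤ → ℤ} {e : ℤ → ℕ} {F : ℤ⟦X⟧}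

theorem coeff_mul_J_eq_sum_of_gaussBinom_sums (hb : b ≠ 0) (he : ∀ m, |m| ≤ e m + 1)
    (hF : ∀ n : ℕ, X ^ (n + 1) ∣ F - ∑ k ∈ range (2 * n + 2),
      monomial (e (k - n)) (c (k - n)) * gaussBinom (X ^ b) (2 * n + 1) k)
    {d n : ℕ} (hn : 2 * d + 1 ≤ n) :
    coeff d (F * J b) = ∑ k ∈ range (2 * n + 2), coeff d (monomial (e (k - n)) (c (k - n))) := by
  rw [← map_sum, ← sub_eq_zero, ← map_sub]
  refine X_pow_dvd_iff.1 ?_ d d.lt_succ_self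
  rw [← sub_add_sub_cancel _ ((∑ k ∈ range (2 * n + 2),
    monomial (e (k - n)) (c (k - n)) * gaussBinom (X ^ b) (2 * n + 1) k) * J b), ← sub_mul]
  refine dvd_add (Dvd.dvd.mul_right ((pow_dvd_pow _ (by omega)).trans (hF n)) _) ?_
  rw [sum_mul, ← sum_sub_distrib]
  refine dvd_sum fun k hk => ?_
  rw [mul_assoc, ← mul_sub_one]
  by_cases hd : d + 1 ≤ e (k - n)
  · exact Dvd.dvd.mul_right (X_pow_dvd_monomial hd _) _
  · obtain ⟨l, hl⟩ := Nat.exists_eq_add_of_le (Nat.lt_succ_iff.1 (mem_range.1 hk))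
    have hm := abs_le.1 (he (k - n))
    rw [hl]
    exact Dvd.dvd.mul_left
      (X_pow_dvd_gaussBinom_mul_J_sub_one hb (by omega) (by omega)) _

theorem hasSum_mul_J_of_gaussBinom_sums (hb : b ≠ 0) (he : ∀ m, |m| ≤ e m + 1)
    (hF : ∀ n : ℕ, X ^ (n + 1) ∣ F - ∑ k ∈ range (2 * n + 2),
      monomial (e (k - n)) (c (k - n)) * gaussBinom (X ^ b) (2 * n + 1) k) :
    HasSum (fun m => monomial (e m) (c m)) (F * J b) := by
  rw [PowerSeries.WithPiTopology.hasSum_iff_hasSum_coeff]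
  intro d
  set n := 2 * d + 1 with hn
  let shift : ℕ ↪ ℤ := ⟨fun k => k - n, fun _ _ h => by simpa using h⟩
  have coeff_eq : coeff d (F * J b) =
      ∑ m ∈ (range (2 * n + 2)).map shift, coeff d (monomial (e m) (c m)) := by
    rw [coeff_mul_J_eq_sum_of_gaussBinom_sums hb he hF hn.ge, sum_map]
    rfl
  rw [coeff_eq]
  refine hasSum_sum_of_ne_finset_zero fun m hm => ?_
  rw [coeff_monomial, if_neg]
  rintro rfl
  have hm_le := abs_le.1 (he m)
  refine hm (mem_map.2 ⟨(m + n).toNat, mem_range.2 (by omega), ?_⟩)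
  change ((m + n).toNat : ℤ) - n = m
  omega

end ThetaLimit

/-- The odd part `(q; q²)_n` of the finite Pochhammer product. -/
def oddPochhammer (n : ℕ) : ℤ⟦X⟧ :=
  ∏ k ∈ range n, (1 - X ^ (2 * k + 1))

theorem qPochhammer_mul_oddPochhammer (n : ℕ) :
    qPochhammer (X ^ 2) n * oddPochhammer n = qPochhammer (X ^ 1) (2 * n) := by
  induction n with
  | zero => simp [qPochhammer, oddPochhammer]
  | succ n ih =>
    rw [mul_add_one, qPochhammer_succ, qPochhammer_succ, qPochhammer_succ, ← ih, oddPochhammer,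
      oddPochhammer, prod_range_succ]
    ring

theorem monomial_eq_intCast_mul (e : ℕ) (c : ℤ) : monomial e c = (c : ℤ⟦X⟧) * X ^ e := by
  ext n
  rw [← zsmul_eq_mul, map_zsmul, coeff_X_pow, coeff_monomial]
  simp

theorem oddPochhammer_mul_oddPochhammer_succ (n : ℕ) :
    oddPochhammer n * oddPochhammer (n + 1) = ∑ k ∈ range (2 * n + 2),
      monomial (((k : ℤ) - n).natAbs ^ 2) (((k : ℤ) - n).negOnePow : ℤ) *
        gaussBinom (X ^ 2) (2 * n + 1) k := by
  have exponents (k : ℕ) : 2 * triangle (k - n) + k = n + ((k : ℤ) - n).natAbs ^ 2 := by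
    zify
    rw [sq_abs]
    linear_combination two_mul_natCast_triangle (k - n)
  have lower_factors : ∏ i ∈ range n, ((X : ℤ⟦X⟧) - 1 * (X ^ 2) ^ (i + 1)) =
      X ^ n * oddPochhammer n := by
    rw [oddPochhammer, show (X : ℤ⟦X⟧) ^ n = ∏ _i ∈ range n, X by simp, ← prod_mul_distrib]
    exact prod_congr rfl fun i _ => by ring
  have upper_factors : ∏ i ∈ range (n + 1), ((1 : ℤ⟦X⟧) - X * (X ^ 2) ^ i) =
      oddPochhammer (n + 1) :=
    prod_congr rfl fun i _ => by ring
  have triple := finite_jacobi_triple_product (pow_ne_zero 2 (X_ne_zero (R := ℤ))) X 1 n (n + 1)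
  rw [lower_factors, upper_factors, mul_assoc, ← add_assoc, ← two_mul] at triple
  apply mul_left_cancel₀ (pow_ne_zero n (X_ne_zero (R := ℤ)))
  rw [triple, mul_sum]
  refine sum_congr rfl fun k _ => ?_
  have powers := congrArg ((X : ℤ⟦X⟧) ^ ·) (exponents k)
  simp only [pow_add, pow_mul] at powers
  rw [monomial_eq_intCast_mul, one_pow]
  linear_combination (((k : ℤ) - n).negOnePow : ℤ) * gaussBinom (X ^ 2) (2 * n + 1) k * powers

/-- The theta function `φ(-q)` of Gauss, as the eta quotient `J₁² / J₂`. -/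
def gaussTheta : ℤ⟦X⟧ := J 1 ^ 2 * Ring.inverse (J 2)

theorem gaussTheta_mul_J_two : gaussTheta * J 2 = J 1 ^ 2 :=
  Ring.inverse_mul_cancel_right _ _ (isUnit_J two_ne_zero)

theorem hasSum_gaussTheta :
    HasSum (fun m : ℤ => monomial (m.natAbs ^ 2) (m.negOnePow : ℤ)) gaussTheta := by
  set O := J 1 * Ring.inverse (J 2)
  have hOJ : O * J 2 = J 1 := Ring.inverse_mul_cancel_right _ _ (isUnit_J two_ne_zero)
  have hO_sub {n m : ℕ} (h : n ≤ m) : X ^ (n + 1) ∣ O - oddPochhammer m := by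
    rw [← (isUnit_J two_ne_zero).dvd_mul_right]
    have decomposition : (O - oddPochhammer m) * J 2 = (J 1 - qPochhammer (X ^ 1) (2 * m)) -
        oddPochhammer m * (J 2 - qPochhammer (X ^ 2) m) := by
      linear_combination hOJ - qPochhammer_mul_oddPochhammer m
    rw [decomposition]
    exact dvd_sub (X_pow_dvd_J_sub_qPochhammer one_ne_zero (by omega))
      (Dvd.dvd.mul_left (X_pow_dvd_J_sub_qPochhammer two_ne_zero h) _)
  have hO_sq : gaussTheta = O ^ 2 * J 2 := by
    rw [gaussTheta]
    linear_combination J 1 * Ring.inverse (J 2) * hOJ.symm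
  rw [hO_sq]
  refine hasSum_mul_J_of_gaussBinom_sums two_ne_zero (fun m => ?_) fun n => ?_
  · push_cast
    nlinarith [abs_nonneg m, sq_nonneg (|m| - 1)]
  · rw [← oddPochhammer_mul_oddPochhammer_succ,
      show O ^ 2 - oddPochhammer n * oddPochhammer (n + 1) =
        O * (O - oddPochhammer n) + oddPochhammer n * (O - oddPochhammer (n + 1)) by ring]
    exact dvd_add (Dvd.dvd.mul_left (hO_sub le_rfl) _) (Dvd.dvd.mul_left (hO_sub n.le_succ) _)

theorem sum_sub_mul_negOnePow_mul_gaussBinom (n : ℕ) :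
    ∑ k ∈ range (2 * n + 2),
        monomial (triangle (k - n)) (-((k - n) * (((k : ℤ) - n).negOnePow : ℤ))) *
          gaussBinom (X ^ 1) (2 * n + 1) k =
      qPochhammer (X ^ 1 : ℤ⟦X⟧) n ^ 2 := by
  have triple := finite_jacobi_triple_product
    (Polynomial.C_ne_zero.2 (pow_ne_zero 1 (X_ne_zero (R := ℤ)))) Polynomial.X 1 n (n + 1)
  rw [prod_range_succ', ← add_assoc, ← two_mul] at triple
  have value_at_one := congrArg (Polynomial.eval 1) triple
  have derivative_at_one := congrArg (fun p => Polynomial.eval 1 (Polynomial.derivative p)) triple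
  simp only [pow_zero, one_pow, mul_one, one_mul, sub_self, mul_zero, zero_mul, zero_add, zero_sub,
    ← map_pow, ← map_gaussBinom, Polynomial.derivative_mul, Polynomial.derivative_sub,
    Polynomial.derivative_one, Polynomial.derivative_X, Polynomial.derivative_sum,
    Polynomial.derivative_intCast, Polynomial.derivative_C, Polynomial.derivative_X_pow,
    Polynomial.eval_add, Polynomial.eval_sub, Polynomial.eval_mul, Polynomial.eval_one,
    Polynomial.eval_X, Polynomial.eval_finsetSum, Polynomial.eval_prod, Polynomial.eval_pow,
    Polynomial.eval_C, Polynomial.eval_intCast, Polynomial.eval_neg, mul_neg]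
    at value_at_one derivative_at_one
  trans (n : ℤ⟦X⟧) * 0 - -(qPochhammer (X ^ 1) n * qPochhammer (X ^ 1) n)
  · rw [value_at_one, qPochhammer, derivative_at_one, mul_sum, ← sum_sub_distrib]
    refine sum_congr rfl fun k _ => ?_
    rw [monomial_eq_intCast_mul]
    push_cast
    ring
  · ring

theorem hasSum_J_one_pow_three :
    HasSum (fun m : ℤ => monomial (triangle m) (-(m * m.negOnePow : ℤ))) (J 1 ^ 3) := by
  rw [pow_succ]
  refine hasSum_mul_J_of_gaussBinom_sums one_ne_zero abs_le_triangle_add_one fun n => ?_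
  rw [sum_sub_mul_negOnePow_mul_gaussBinom, sq_sub_sq]
  exact Dvd.dvd.mul_left (X_pow_dvd_J_sub_qPochhammer one_ne_zero le_rfl) _

/-! ### The quintuple-product theta series `J₁⁵ / J₂²` -/

instance : CharZero ℤ⟦X⟧ := charZero_of_injective_ringHom C_injective

section MonomialSums

open Filter Topology

variable {ι κ R : Type*} [CommRing R] [TopologicalSpace R]

theorem summable_monomial {c : ι → R} {e : ι → ℕ} (he : Tendsto e cofinite atTop) :
    Summable fun i => monomial (e i) (c i) := by
  have coeff_summable (d : ℕ) : Summable fun i => coeff d (monomial (e i) (c i)) := by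
    refine summable_of_hasFiniteSupport (.subset (s := {i | ¬ d + 1 ≤ e i})
      (he.eventually_ge_atTop (d + 1)) fun i hi => ?_)
    rw [Function.mem_support, coeff_monomial] at hi
    grind
  refine ⟨PowerSeries.mk fun d => ∑' i, coeff d (monomial (e i) (c i)), ?_⟩
  rw [PowerSeries.WithPiTopology.hasSum_iff_hasSum_coeff]
  intro d
  rw [coeff_mk]
  exact (coeff_summable d).hasSum

theorem tendsto_add_cofinite_atTop {e : ι → ℕ} {e' : κ → ℕ} (he : Tendsto e cofinite atTop)
    (he' : Tendsto e' cofinite atTop) :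
    Tendsto (fun p : ι × κ => e p.1 + e' p.2) cofinite atTop := by
  rw [tendsto_atTop] at *
  intro d
  refine (Set.Finite.prod (s := {i | ¬ d ≤ e i}) (t := {k | ¬ d ≤ e' k})
    (he d) (he' d)).subset fun p hp => ?_
  have hlt : ¬ d ≤ e p.1 + e' p.2 := hp
  constructor <;> simp only [Set.mem_ofPred_eq] <;> omega

theorem tendsto_cofinite_atTop_of_abs_le {e : ℤ → ℕ} (he : ∀ m, |m| ≤ e m + 1) :
    Tendsto e cofinite atTop := by
  rw [tendsto_atTop]
  intro d
  refine (Set.finite_Icc (-(d : ℤ)) d).subset fun m hm => ?_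
  have hlt : ¬ d ≤ e m := hm
  exact Set.mem_Icc.2 (abs_le.1 ((he m).trans (by omega)))

theorem hasSum_monomial_mul [IsTopologicalSemiring R] [T3Space R⟦X⟧] {c : ι → R} {e : ι → ℕ}
    {c' : κ → R} {e' : κ → ℕ} {f g : R⟦X⟧} (he : Tendsto e cofinite atTop)
    (he' : Tendsto e' cofinite atTop) (hf : HasSum (fun i => monomial (e i) (c i)) f)
    (hg : HasSum (fun i => monomial (e' i) (c' i)) g) :
    HasSum (fun p : ι × κ => monomial (e p.1 + e' p.2) (c p.1 * c' p.2)) (f * g) := by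
  simpa only [monomial_mul_monomial] using hf.mul hg (by
    simpa only [monomial_mul_monomial] using summable_monomial (tendsto_add_cofinite_atTop he he'))

theorem continuous_expand {k : ℕ} (hk : k ≠ 0) : Continuous (expand k hk : R⟦X⟧ → R⟦X⟧) := by
  refine continuous_pi fun d => ?_
  obtain ⟨n, rfl⟩ : ∃ n, Finsupp.single () n = d := ⟨d (), by ext; simp⟩
  change Continuous fun f : R⟦X⟧ => coeff n (expand k hk f)
  simp only [coeff_expand]
  split_ifs
  · exact PowerSeries.WithPiTopology.continuous_coeff R _
  · exact continuous_const

theorem hasSum_expand_monomial {c : ι → R} {e : ι → ℕ} {f : R⟦X⟧} {k : ℕ} (hk : k ≠ 0)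
    (hf : HasSum (fun i => monomial (e i) (c i)) f) :
    HasSum (fun i => monomial (k * e i) (c i)) (expand k hk f) := by
  simpa [Function.comp_def, expand_monomial] using hf.map (expand k hk) (continuous_expand hk)

theorem hasSum_of_forall_residue {M : Type*} [AddCommMonoid M] [TopologicalSpace M]
    [ContinuousAdd M] {m : ℕ} [NeZero m] {f : ℤ × κ → M} {a : Fin m → M}
    (h : ∀ r : Fin m, HasSum (fun p : ℤ × κ => f (m * p.1 + r, p.2)) (a r)) :
    HasSum f (∑ r, a r) := by
  have hm : (m : ℤ) ≠ 0 := by exact_mod_cast NeZero.ne m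
  have residue_part (r : Fin m) :
      HasSum (fun p : ℤ × κ => if p.1 % m = r then f p else 0) (a r) := by
    have hinj : Function.Injective fun p : ℤ × κ => ((m : ℤ) * p.1 + r, p.2) := by
      rintro ⟨i, k⟩ ⟨i', k'⟩ hp
      simp only [Prod.mk.injEq, add_left_inj, mul_right_inj' hm] at hp
      simp only [hp]
    rw [← hinj.hasSum_iff]
    · convert h r using 2 with p
      simp only [Function.comp]
      rw [if_pos]
      rw [Int.mul_add_emod_self_left]
      exact Int.emod_eq_of_lt (by omega) (by omega)
    · rintro ⟨i, k⟩ hp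
      refine if_neg fun hi => hp ⟨(i / m, k), ?_⟩
      simp only [← hi, Int.mul_ediv_add_emod]
  convert hasSum_sum fun r (_ : r ∈ univ) => residue_part r using 1
  ext p
  have hr : (p.1 % m).toNat < m := by
    have := Int.emod_lt_of_pos p.1 (Int.natCast_pos.2 (NeZero.pos m))
    omega
  rw [sum_eq_single (⟨_, hr⟩ : Fin m)]
  · simp [Int.emod_nonneg _ hm]
  · intro r _ hne
    refine if_neg fun h => hne (Fin.ext ?_)
    simp [h]
  · simp

theorem hasSum_zero_of_comp_eq_neg {M : Type*} [AddCommGroup M] [IsAddTorsionFree M]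
    [TopologicalSpace M] [IsTopologicalAddGroup M] [T2Space M] {f : ι → M} (hf : Summable f)
    (σ : Equiv.Perm ι) (h : ∀ i, f (σ i) = -f i) : HasSum f 0 := by
  obtain ⟨s, hs⟩ := hf
  have hneg : HasSum (fun i => -f i) s := by
    simpa only [Function.comp_def, h] using σ.hasSum_iff.2 hs
  rwa [self_eq_neg.1 (hneg.unique hs.neg)] at hs

end MonomialSums

theorem J_one_eq_pentagonalSeries : J 1 = pentagonalSeries ℤ := by
  ext d
  obtain ⟨s, hs⟩ := Filter.eventually_atTop.1 (coeff_prod_one_sub_X_pow_eventually_eq ℤ d)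
  obtain ⟨N, hN⟩ := s.exists_nat_subset_range
  have hJ := X_pow_dvd_iff.1
    (X_pow_dvd_J_sub_qPochhammer one_ne_zero (Nat.le_add_left d N)) d d.lt_succ_self
  rw [map_sub, sub_eq_zero] at hJ
  rw [hJ, ← hs (range (N + d)) (hN.trans (range_mono (by omega)))]
  simp [qPochhammer]

theorem hasSum_J_one : HasSum (fun n : ℤ => monomial (pentagonal n) (n.negOnePow : ℤ)) (J 1) := by
  rw [J_one_eq_pentagonalSeries]
  convert PowerSeries.WithPiTopology.hasSum_pentagonalSeries ℤ using 2 with n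
  simp [monomial_eq_intCast_mul]

theorem tendsto_triangle : Filter.Tendsto triangle .cofinite .atTop :=
  tendsto_cofinite_atTop_of_abs_le abs_le_triangle_add_one

theorem tendsto_natAbs_sq : Filter.Tendsto (fun m : ℤ => m.natAbs ^ 2) .cofinite .atTop :=
  tendsto_cofinite_atTop_of_abs_le fun m => by
    rw [abs_le]
    push_cast
    rw [sq_abs]
    constructor <;> nlinarith

theorem tendsto_pentagonal : Filter.Tendsto pentagonal .cofinite .atTop :=
  tendsto_cofinite_atTop_of_abs_le fun m => by
    have := two_mul_natCast_pentagonal m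
    rw [abs_le]
    constructor <;> nlinarith [sq_nonneg (m + 1), sq_nonneg (m - 1)]

theorem triangle_one_sub (m : ℤ) : triangle (1 - m) = triangle m := by
  have h₁ := two_mul_natCast_triangle m
  have h₂ := two_mul_natCast_triangle (1 - m)
  zify
  linarith

theorem hasSum_negOnePow_triangle :
    HasSum (fun m : ℤ => monomial (triangle m) (m.negOnePow : ℤ)) 0 := by
  refine hasSum_zero_of_comp_eq_neg (summable_monomial tendsto_triangle) (Equiv.subLeft 1)
    fun m => ?_
  simp [triangle_one_sub, Int.negOnePow_sub]

theorem hasSum_two_mul_J_one_pow_three :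
    HasSum (fun m : ℤ => monomial (triangle m) ((1 - 2 * m) * m.negOnePow : ℤ))
      (2 * J 1 ^ 3) := by
  rw [← add_zero (2 * J 1 ^ 3)]
  refine ((hasSum_J_one_pow_three.mul_left 2).add hasSum_negOnePow_triangle).congr_fun fun m => ?_
  simp only [monomial_eq_intCast_mul]
  push_cast
  ring

/-- The `(n, j)` term of the double theta series of `2 J₁³ · J₁² / J₂`, after the substitution
`m = 2j - n` for the summation variable of `J₁³`. -/
def crossTerm (p : ℤ × ℤ) : ℤ⟦X⟧ :=
  monomial (triangle (2 * p.2 - p.1) + p.2.natAbs ^ 2) ((2 * p.1 + 1) * (p.1 + p.2).negOnePow)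

theorem crossTerm_eq_monomial {n j w s : ℤ} {e : ℕ} (hw : 2 * n + 1 = w) (hs : Even (n + j - s))
    (he : (2 * j - n) * (2 * j - n - 1) + 2 * j ^ 2 = 2 * (e : ℤ)) :
    crossTerm (n, j) = monomial e (w * s.negOnePow : ℤ) := by
  have := two_mul_natCast_triangle (2 * j - n)
  rw [crossTerm, hw, (Int.negOnePow_eq_iff _ _).2 hs]
  congr 2
  zify
  rw [sq_abs]
  linarith

theorem hasSum_crossTerm : HasSum crossTerm (2 * J 1 ^ 3 * gaussTheta) := by
  have hprod := hasSum_monomial_mul tendsto_triangle tendsto_natAbs_sq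
    hasSum_two_mul_J_one_pow_three hasSum_gaussTheta
  obtain ⟨w, hw⟩ := summable_monomial (c := fun j : ℤ => (j * j.negOnePow : ℤ)) tendsto_natAbs_sq
  have hzero := hasSum_monomial_mul tendsto_triangle tendsto_natAbs_sq hasSum_negOnePow_triangle hw
  have hswap : Function.Involutive fun p : ℤ × ℤ => (2 * p.2 - p.1, p.2) := fun p => by simp
  convert hswap.toPerm.hasSum_iff.2 (hprod.add (hzero.mul_left 4)) using 1
  · ext1 ⟨n, j⟩
    have hsign : (2 * j - n + j).negOnePow = (n + j).negOnePow :=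
      (Int.negOnePow_eq_iff _ _).2 ⟨j - n, by ring⟩
    rw [Int.negOnePow_add] at hsign
    simp only [crossTerm, Function.comp, Function.Involutive.coe_toPerm, monomial_eq_intCast_mul,
      ← hsign]
    push_cast
    ring
  · ring

/-- The weight `3/2` theta series `J₁⁵ / J₂² = ∑ₙ (1 - 6n) q^{n(3n-1)/2}`. -/
def quintupleTheta : ℤ⟦X⟧ := J 1 ^ 5 * Ring.inverse (J 2) ^ 2

theorem quintupleTheta_mul_J_two_sq : quintupleTheta * J 2 ^ 2 = J 1 ^ 5 := by
  rw [quintupleTheta, mul_assoc, ← mul_pow, Ring.inverse_mul_cancel _ (isUnit_J two_ne_zero),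
    one_pow, mul_one]

theorem hasSum_crossTerm_three_mul {g : ℤ⟦X⟧}
    (hg : HasSum (fun n : ℤ => monomial (pentagonal n) (1 - 6 * n)) g) :
    HasSum (fun p : ℤ × ℤ => crossTerm (3 * p.1, p.2)) (g * J 2) := by
  have hJ : HasSum (fun j : ℤ => monomial (2 * pentagonal j) (j.negOnePow : ℤ)) (J 2) := by
    simpa only [expand_J one_ne_zero two_ne_zero, mul_one] using
      hasSum_expand_monomial two_ne_zero hasSum_J_one
  have he : Filter.Tendsto (fun j => 2 * pentagonal j) .cofinite .atTop :=
    tendsto_pentagonal.const_mul_atTop' two_pos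
  have hinv : Function.Involutive fun p : ℤ × ℤ => (-p.1, p.2 - p.1) := fun p => by simp
  rw [← hinv.toPerm.hasSum_iff]
  convert hasSum_monomial_mul tendsto_pentagonal he hg hJ using 1
  ext1 ⟨l, j⟩
  change crossTerm (3 * -l, j - l) = _
  have h₁ := two_mul_natCast_pentagonal l
  have h₂ := two_mul_natCast_pentagonal j
  refine crossTerm_eq_monomial (by ring) ⟨-2 * l, by ring⟩ ?_
  push_cast
  linarith

theorem hasSum_crossTerm_three_mul_add_two {g : ℤ⟦X⟧}
    (hg : HasSum (fun n : ℤ => monomial (pentagonal n) (1 - 6 * n)) g) :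
    HasSum (fun p : ℤ × ℤ => crossTerm (3 * p.1 + 2, p.2)) (g * J 2) := by
  have hinv : Function.Involutive fun p : ℤ × ℤ => (-1 - p.1, -p.2) := fun p => by simp
  rw [← hinv.toPerm.hasSum_iff]
  convert hasSum_crossTerm_three_mul hg using 1
  ext1 ⟨l, j⟩
  change crossTerm (3 * (-1 - l) + 2, -j) = crossTerm (3 * l, j)
  have := two_mul_natCast_triangle (2 * j - 3 * l)
  rw [crossTerm_eq_monomial (w := -(2 * (3 * l) + 1)) (s := 3 * l + j + 1)
    (e := triangle (2 * j - 3 * l) + j.natAbs ^ 2) (by ring) ⟨-1 - 3 * l - j, by ring⟩ (by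
      push_cast
      rw [sq_abs]
      linarith), Int.negOnePow_succ]
  simp only [crossTerm, Units.val_neg, neg_mul_neg]

theorem hasSum_crossTerm_three_mul_add_one :
    HasSum (fun p : ℤ × ℤ => crossTerm (3 * p.1 + 1, p.2)) 0 := by
  have hinv : Function.Involutive fun p : ℤ × ℤ => (p.1, 2 * p.1 + 1 - p.2) := fun p => by simp
  have hinj : Function.Injective fun p : ℤ × ℤ => (3 * p.1 + 1, p.2) := by
    rintro ⟨l, j⟩ ⟨l', j'⟩ h
    simpa using h
  refine hasSum_zero_of_comp_eq_neg (hasSum_crossTerm.summable.comp_injective hinj) hinv.toPerm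
    fun ⟨l, j⟩ => ?_
  change crossTerm (3 * l + 1, 2 * l + 1 - j) = -crossTerm (3 * l + 1, j)
  have := two_mul_natCast_triangle (2 * j - (3 * l + 1))
  rw [crossTerm_eq_monomial (w := 2 * (3 * l + 1) + 1) (s := 3 * l + 1 + j + 1)
    (e := triangle (2 * j - (3 * l + 1)) + j.natAbs ^ 2) rfl ⟨l - j, by ring⟩ (by
      push_cast
      rw [sq_abs]
      linarith), Int.negOnePow_succ]
  simp [crossTerm]

theorem hasSum_quintupleTheta :
    HasSum (fun n : ℤ => monomial (pentagonal n) (1 - 6 * n)) quintupleTheta := by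
  obtain ⟨g, hg⟩ := summable_monomial (c := fun n : ℤ => 1 - 6 * n) tendsto_pentagonal
  have hsum : HasSum crossTerm (∑ r, ![g * J 2, 0, g * J 2] r) := by
    refine hasSum_of_forall_residue fun r => ?_
    fin_cases r
    · simpa using hasSum_crossTerm_three_mul hg
    · simpa using hasSum_crossTerm_three_mul_add_one
    · simpa using hasSum_crossTerm_three_mul_add_two hg
  have hJ : 2 * J 1 ^ 3 * gaussTheta = 2 * (g * J 2) := by
    rw [hasSum_crossTerm.unique hsum]
    simp [Fin.sum_univ_three, two_mul]
  have hgJ : J 1 ^ 3 * gaussTheta = g * J 2 := by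
    refine mul_left_cancel₀ (two_ne_zero' ℤ⟦X⟧) ?_
    linear_combination hJ
  have hquintuple : g * J 2 ^ 2 = quintupleTheta * J 2 ^ 2 := by
    linear_combination -J 2 * hgJ + J 1 ^ 3 * gaussTheta_mul_J_two - quintupleTheta_mul_J_two_sq
  rwa [← ((isUnit_J two_ne_zero).pow 2).mul_left_injective hquintuple]

/-! ### Theta series modulo 7 as solutions of differential equations -/

section Euler

variable (R : Type*) [CommRing R]

/-- The Euler operator `q d/dq`. -/
def euler : Derivation R R⟦X⟧ R⟦X⟧ := (X : R⟦X⟧) • PowerSeries.derivative R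

variable {R}

theorem euler_apply (f : R⟦X⟧) : euler R f = X * PowerSeries.derivative R f := rfl

@[simp]
theorem coeff_euler (n : ℕ) (f : R⟦X⟧) : coeff n (euler R f) = n * coeff n f := by
  cases n with
  | zero => simp [euler_apply]
  | succ n =>
    rw [euler_apply, coeff_succ_X_mul, coeff_derivative]
    push_cast
    ring

theorem euler_mul (f g : R⟦X⟧) : euler R (f * g) = f * euler R g + g * euler R f :=
  (euler R).leibniz f g

theorem euler_pow (f : R⟦X⟧) (n : ℕ) :
    euler R (f ^ n) = n * f ^ (n - 1) * euler R f := by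
  rw [Derivation.leibniz_pow, nsmul_eq_mul, smul_eq_mul, mul_assoc]

theorem euler_ofNat (n : ℕ) [n.AtLeastTwo] : euler R (ofNat(n) : R⟦X⟧) = 0 :=
  (euler R).map_natCast n

theorem euler_X : euler R X = X := by
  simp [euler_apply]

theorem euler_expand {k : ℕ} (hk : k ≠ 0) (f : R⟦X⟧) :
    euler R (expand k hk f) = k * expand k hk (euler R f) := by
  ext n
  rw [← map_natCast (C (R := R)), coeff_C_mul, coeff_euler, coeff_expand, coeff_expand]
  split_ifs with h
  · obtain ⟨m, rfl⟩ := h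
    rw [Nat.mul_div_cancel_left _ (Nat.pos_of_ne_zero hk), coeff_euler]
    push_cast
    ring
  · simp

theorem map_euler {S : Type*} [CommRing S] (φ : R →+* S) (f : R⟦X⟧) :
    PowerSeries.map φ (euler R f) = euler S (PowerSeries.map φ f) := by
  ext n
  simp

theorem hasSum_euler [TopologicalSpace R] [IsTopologicalRing R] {ι : Type*} {e : ι → ℕ}
    {c : ι → R} {f : R⟦X⟧} (hf : HasSum (fun i => monomial (e i) (c i)) f) :
    HasSum (fun i => monomial (e i) (e i * c i)) (euler R f) := by
  rw [PowerSeries.WithPiTopology.hasSum_iff_hasSum_coeff] at *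
  intro d
  rw [coeff_euler]
  refine ((hf d).mul_left (d : R)).congr_fun fun i => ?_
  simp only [coeff_monomial]
  split_ifs with h <;> simp [h]

theorem euler_third_order_of_hasSum [TopologicalSpace R] [IsTopologicalRing R] [T2Space R]
    {ι : Type*} {e : ι → ℕ} {c c' : ι → R} {f g : R⟦X⟧} {a b : R}
    (hf : HasSum (fun i => monomial (e i) (c i)) f)
    (hg : HasSum (fun i => monomial (e i) (c' i)) g)
    (h : ∀ i, ((e i : R) ^ 3 + a * e i ^ 2 + b * e i) * c i = c' i) :
    euler R (euler R (euler R f)) + C a * euler R (euler R f) + C b * euler R f = g := by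
  have h₁ := hasSum_euler hf
  have h₂ := hasSum_euler h₁
  refine (((hasSum_euler h₂).add (h₂.mul_left (C a))).add (h₁.mul_left (C b))).unique
    (hg.congr_fun fun i => ?_)
  simp only [← monomial_zero_eq_C_apply, monomial_mul_monomial, zero_add, ← map_add]
  rw [← h i]
  ring_nf

end Euler

instance : Fact (Nat.Prime 7) := ⟨by norm_num⟩

instance : CharP (ZMod 7)⟦X⟧ 7 := charP_of_injective_ringHom C_injective 7

/-- Reduction of the coefficients of a power series modulo 7. -/
def reduce : ℤ⟦X⟧ →+* (ZMod 7)⟦X⟧ := PowerSeries.map (Int.castRingHom (ZMod 7))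

theorem reduce_X : reduce X = X := by
  simp [reduce]

theorem reduce_expand {k : ℕ} (hk : k ≠ 0) (f : ℤ⟦X⟧) :
    reduce (expand k hk f) = expand k hk (reduce f) := by
  simp [reduce, map_expand]

theorem hasSum_reduce {ι : Type*} {e : ι → ℕ} {c : ι → ℤ} {f : ℤ⟦X⟧}
    (hf : HasSum (fun i => monomial (e i) (c i)) f) :
    HasSum (fun i => monomial (e i) (c i : ZMod 7)) (reduce f) := by
  rw [PowerSeries.WithPiTopology.hasSum_iff_hasSum_coeff] at *
  intro d
  refine ((hf d).map (Int.castAddHom (ZMod 7)) continuous_of_discreteTopology).congr_fun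
    fun i => ?_
  simp only [coeff_monomial, Function.comp, Int.coe_castAddHom]
  split_ifs <;> simp

theorem expand_prime_eq_pow {p : ℕ} [hp : Fact p.Prime] (f : (ZMod p)⟦X⟧) :
    expand p hp.out.ne_zero f = f ^ p := by
  have h := MvPowerSeries.map_frobenius_expand (σ := Unit) (R := ZMod p) p hp.out.ne_zero (f := f)
  rw [ZMod.frobenius_zmod] at h
  rw [← h]
  ext n
  simp [PowerSeries.expand]

local notation "θ" => euler (ZMod 7)

/-- The reduction of `J₁` modulo 7. -/
def j1 : (ZMod 7)⟦X⟧ := reduce (J 1)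

/-- The reduction of `J₂` modulo 7. -/
def j2 : (ZMod 7)⟦X⟧ := reduce (J 2)

theorem triangle_add_one_eq_sq (m : ℤ) : (triangle m : ZMod 7) + 1 = (1 - 2 * m) ^ 2 := by
  have h := congrArg (Int.cast (R := ZMod 7)) (two_mul_natCast_triangle m)
  push_cast at h
  grind

-- `8 · triangle m + 1 = (2m - 1)²`, so Fermat's little theorem kills every term of the sum.
theorem euler_third_order_j1_cube :
    θ (θ (θ (j1 ^ 3))) + 3 * θ (θ (j1 ^ 3)) + 3 * θ (j1 ^ 3) = 0 := by
  have h := euler_third_order_of_hasSum (a := 3) (b := 3) (c' := fun _ => 0) (g := 0)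
    (hasSum_reduce hasSum_two_mul_J_one_pow_three)
    (by simp only [map_zero]; exact hasSum_zero) fun m => ?_
  · simp only [map_mul, map_pow, map_ofNat, j1, euler_mul, euler_ofNat, map_add] at h ⊢
    grind
  · have fermat := ZMod.pow_card (1 - 2 * m : ZMod 7)
    have := triangle_add_one_eq_sq m
    push_cast
    grind

theorem pentagonal_cubic (n : ℤ) :
    (pentagonal n : ZMod 7) ^ 3 + 1 * pentagonal n ^ 2 + 5 * pentagonal n = 1 - (n + 1) ^ 6 := by
  have h := congrArg (Int.cast (R := ZMod 7)) (two_mul_natCast_pentagonal n)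
  push_cast at h
  have : (pentagonal n : ZMod 7) + 5 = 5 * (n + 1) ^ 2 := by grind
  grind

theorem euler_third_order_quintupleTheta :
    θ (θ (θ (reduce quintupleTheta))) + 1 * θ (θ (reduce quintupleTheta))
      + 5 * θ (reduce quintupleTheta) = 0 := by
  have h := euler_third_order_of_hasSum (a := 1) (b := 5) (c' := fun _ => 0) (g := 0)
    (hasSum_reduce hasSum_quintupleTheta) (by simp only [map_zero]; exact hasSum_zero) fun n => ?_
  · simpa only [map_one, map_ofNat] using h
  · have fermat := ZMod.pow_card (n + 1 : ZMod 7)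
    rw [pentagonal_cubic]
    push_cast
    grind

theorem pentagonal_seven_mul_sub_one (k : ℤ) :
    pentagonal (7 * k - 1) = 2 + 49 * pentagonal k := by
  have h₁ := two_mul_natCast_pentagonal k
  have h₂ := two_mul_natCast_pentagonal (7 * k - 1)
  zify
  linarith

theorem reduce_expand_J_one : reduce (expand 49 (by norm_num) (J 1)) = j1 ^ 49 := by
  have h := expand_mul 7 (by norm_num) 7 (by norm_num) j1
  rw [expand_prime_eq_pow, expand_prime_eq_pow, ← pow_mul] at h
  rw [reduce_expand, ← j1, ← h]

theorem hasSum_ite_pentagonal :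
    HasSum (fun n : ℤ => monomial (pentagonal n) (if 7 ∣ n + 1 then (n.negOnePow : ℤ) else 0))
      (-(X ^ 2 * expand 49 (by norm_num) (J 1))) := by
  have hinj : Function.Injective fun k : ℤ => 7 * k - 1 := fun a b h => by
    simp only at h
    omega
  rw [← hinj.hasSum_iff]
  · refine ((hasSum_expand_monomial (by norm_num) hasSum_J_one).mul_left (X ^ 2)).neg.congr_fun
      fun k => ?_
    have hsign : (7 * k - 1).negOnePow = (k + 1).negOnePow :=
      (Int.negOnePow_eq_iff _ _).2 ⟨3 * k - 1, by ring⟩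
    simp only [Function.comp, pentagonal_seven_mul_sub_one, sub_add_cancel, dvd_mul_right, if_true,
      hsign, Int.negOnePow_succ, monomial_eq_intCast_mul, pow_add]
    push_cast
    ring
  · intro n hn
    rw [if_neg fun ⟨k, hk⟩ => hn ⟨k, by simp only; omega⟩, map_zero]

theorem euler_third_order_j1 :
    θ (θ (θ j1)) + 1 * θ (θ j1) + 5 * θ j1 = -(X ^ 2 * j1 ^ 48) * j1 := by
  have h := euler_third_order_of_hasSum (a := 1) (b := 5) (hasSum_reduce hasSum_J_one)
    (hasSum_reduce hasSum_ite_pentagonal) fun n => ?_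
  · simp only [map_neg, map_mul, map_pow, reduce_X, reduce_expand_J_one, map_one,
      map_ofNat] at h
    rw [j1, h, j1]
    ring
  · have hdvd : (7 : ℤ) ∣ n + 1 ↔ (n + 1 : ZMod 7) = 0 := by
      rw [← Nat.cast_ofNat, ← ZMod.intCast_zmod_eq_zero_iff_dvd (n + 1) 7]
      push_cast
      rfl
    have fermat := ZMod.pow_card_sub_one (p := 7) (n + 1 : ZMod 7)
    rw [pentagonal_cubic]
    push_cast
    grind

/-! ### Eisenstein series modulo 7 -/

section LogarithmicDerivative

variable {R K : Type*} [CommRing R] [CommRing K] [Algebra R K] (D : Derivation R K K) {f w : K}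

theorem derivation_sq_of_eq_mul (hw : D f = w * f) : D (D f) = (D w + w ^ 2) * f := by
  rw [hw, Derivation.leibniz, hw, smul_eq_mul, smul_eq_mul]
  ring

theorem riccati_of_third_order {a b c : K} (hf : IsUnit f) (hw : D f = w * f)
    (h : D (D (D f)) + a * D (D f) + b * D f = c * f) :
    D (D w) + 3 * w * D w + w ^ 3 + a * (D w + w ^ 2) + b * w = c := by
  have hcube : D (D (D f)) = (D (D w) + 3 * w * D w + w ^ 3) * f := by
    rw [derivation_sq_of_eq_mul D hw, Derivation.leibniz, map_add, Derivation.leibniz_pow, hw]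
    simp only [smul_eq_mul, nsmul_eq_mul]
    push_cast
    ring
  rw [hcube, derivation_sq_of_eq_mul D hw, hw] at h
  refine hf.mul_left_injective ?_
  linear_combination h

end LogarithmicDerivative

/-- The reduction modulo 7 of the discriminant form `q J₁²⁴`. -/
def delta1 : (ZMod 7)⟦X⟧ := X * j1 ^ 24

/-- The reduction modulo 7 of `q² J₂²⁴`. -/
def delta2 : (ZMod 7)⟦X⟧ := X ^ 2 * j2 ^ 24

theorem isUnit_j1 : IsUnit j1 := (isUnit_J one_ne_zero).map reduce

theorem isUnit_j2 : IsUnit j2 := (isUnit_J two_ne_zero).map reduce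

theorem expand_two_j1 : expand 2 two_ne_zero j1 = j2 := by
  rw [j1, ← reduce_expand, expand_J one_ne_zero, mul_one, j2]

theorem expand_two_delta1 : expand 2 two_ne_zero delta1 = delta2 := by
  rw [delta1, map_mul, map_pow, expand_two_j1, expand_X, delta2]

theorem constantCoeff_reduce (f : ℤ⟦X⟧) :
    constantCoeff (reduce f) = ((constantCoeff f : ℤ) : ZMod 7) := by
  rw [reduce, ← coeff_zero_eq_constantCoeff_apply, coeff_map, coeff_zero_eq_constantCoeff_apply,
    eq_intCast]

theorem constantCoeff_j1 : constantCoeff j1 = 1 := by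
  rw [j1, constantCoeff_reduce, constantCoeff_J one_ne_zero, Int.cast_one]

theorem coeff_one_j1 : coeff 1 j1 = -1 := by
  have h : coeff 1 (J 1) = -1 := by
    simp [J, prod_range_succ, coeff_one_mul, coeff_X_pow, coeff_one]
  rw [j1, reduce, coeff_map, h]
  simp

theorem constantCoeff_delta1 : constantCoeff delta1 = 0 := by
  simp [delta1]

theorem coeff_one_delta1 : coeff 1 delta1 = 1 := by
  simp [delta1, constantCoeff_j1]

theorem j1_mul_inv : j1 * j1⁻¹ = 1 :=
  PowerSeries.mul_inv_cancel _ (by simp [constantCoeff_j1])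

/-- The Eisenstein series `E₂` modulo 7: the logarithmic derivative of `q J₁²⁴`. -/
def E2 : (ZMod 7)⟦X⟧ := 1 + 3 * (θ j1 * j1⁻¹)

theorem euler_j1_eq_E2 : θ j1 = 5 * (E2 - 1) * j1 := by
  have := j1_mul_inv
  rw [E2]
  grind

theorem euler_delta1 : θ delta1 = E2 * delta1 := by
  rw [delta1, euler_mul, euler_pow, euler_X, euler_j1_eq_E2]
  grind

theorem constantCoeff_E2 : constantCoeff E2 = 1 := by
  have h : constantCoeff (θ j1) = 0 := by simp [euler_apply]
  simp [E2, h]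

theorem coeff_one_E2 : coeff 1 E2 = 4 := by
  have h : constantCoeff (θ j1) = 0 := by simp [euler_apply]
  have h₃ : (3 : (ZMod 7)⟦X⟧) = C 3 := (map_ofNat C 3).symm
  rw [E2, h₃, map_add, coeff_C_mul, coeff_one_mul, coeff_euler, coeff_one_j1, h]
  simp only [constantCoeff_inv, constantCoeff_j1, coeff_one, mul_zero, add_zero, inv_one]
  decide

theorem isUnit_E2 : IsUnit E2 := by
  simp [PowerSeries.isUnit_iff_constantCoeff, constantCoeff_E2]

theorem E2_jacobi_ode : E2 ^ 3 + 3 * E2 * θ E2 + θ (θ E2) = 1 := by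
  have hlog : θ (j1 ^ 3) = (E2 - 1) * j1 ^ 3 := by
    rw [euler_pow, euler_j1_eq_E2]
    grind
  have h := riccati_of_third_order θ (isUnit_j1.pow 3) hlog
    (by rw [euler_third_order_j1_cube, zero_mul])
  simp only [map_sub, Derivation.map_one_eq_zero] at h
  grind

theorem E2_pentagonal_ode : 5 * θ (θ E2) + 5 * E2 * θ E2 - E2 ^ 3 = -1 - delta1 ^ 2 := by
  have h := riccati_of_third_order θ isUnit_j1 euler_j1_eq_E2 euler_third_order_j1
  simp only [map_sub, map_add, euler_mul, euler_ofNat, Derivation.map_one_eq_zero, map_zero] at h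
  rw [delta1]
  grind

theorem four_mul_E2_mul_euler_E2 : 4 * E2 * θ E2 = 1 - delta1 ^ 2 - E2 ^ 3 := by
  have h₁ := E2_jacobi_ode
  have h₂ := E2_pentagonal_ode
  grind

theorem E2_cube_sub_mul_sub :
    (E2 ^ 3 - (1 - delta1) ^ 2) * (E2 ^ 3 - (1 + delta1) ^ 2) = 0 := by
  have h₁ := E2_jacobi_ode
  have h₂ := four_mul_E2_mul_euler_E2
  have h₃ := congrArg θ h₂
  simp only [euler_mul, map_sub, Derivation.map_one_eq_zero, euler_ofNat, euler_pow,
    euler_delta1] at h₃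
  push_cast at h₃
  grind

-- The coefficient of `q` decides between the two square roots.
theorem E2_cube : E2 ^ 3 = (1 - delta1) ^ 2 := by
  refine sub_eq_zero.1 ((mul_eq_zero.1 E2_cube_sub_mul_sub).resolve_right fun h => ?_)
  have hcoeff := congrArg (coeff 1) (sub_eq_zero.1 h)
  simp only [coeff_one_pow, map_add, coeff_one, map_one, constantCoeff_E2, coeff_one_E2,
    constantCoeff_delta1, coeff_one_delta1] at hcoeff
  revert hcoeff
  decide

/-- The Eisenstein series `E₄` modulo 7. -/
def E4 : (ZMod 7)⟦X⟧ := (1 - delta1) * E2⁻¹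

theorem E2_mul_inv : E2 * E2⁻¹ = 1 :=
  PowerSeries.mul_inv_cancel _ (by simp [constantCoeff_E2])

theorem E4_sq : E4 ^ 2 = E2 := by
  have := E2_mul_inv
  have := E2_cube
  rw [E4]
  grind

theorem delta1_eq_one_sub_E4_cube : delta1 = 1 - E4 ^ 3 := by
  rw [pow_succ, E4_sq, E4, mul_left_comm, E2_mul_inv]
  ring

theorem euler_E4 : θ E4 = 2 * (1 - E4 ^ 3) := by
  have h := euler_delta1
  rw [delta1_eq_one_sub_E4_cube, map_sub, Derivation.map_one_eq_zero, euler_pow] at h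
  push_cast at h
  rw [E4_sq] at h
  refine isUnit_E2.mul_left_cancel ?_
  grind

theorem euler_j1 : θ j1 = 5 * (E4 ^ 2 - 1) * j1 := by
  rw [E4_sq, euler_j1_eq_E2]

theorem constantCoeff_E4 : constantCoeff E4 = 1 := by
  simp [E4, constantCoeff_delta1, constantCoeff_E2]

/-- `E₄(q²)` modulo 7. -/
def E4Two : (ZMod 7)⟦X⟧ := expand 2 two_ne_zero E4

theorem delta2_eq_one_sub_E4Two_cube : delta2 = 1 - E4Two ^ 3 := by
  rw [← expand_two_delta1, delta1_eq_one_sub_E4_cube, map_sub, map_one, map_pow, E4Two]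

theorem euler_E4Two : θ E4Two = 4 * (1 - E4Two ^ 3) := by
  rw [E4Two, euler_expand, euler_E4, map_mul, map_sub, map_one, map_pow, map_ofNat]
  push_cast
  ring

theorem euler_j2_eq_E4Two : θ j2 = 3 * (E4Two ^ 2 - 1) * j2 := by
  rw [← expand_two_j1, euler_expand, euler_j1, E4Two]
  simp only [map_mul, map_sub, map_pow, map_one, map_ofNat]
  grind

theorem constantCoeff_E4Two : constantCoeff E4Two = 1 := by
  rw [E4Two, constantCoeff_expand, constantCoeff_E4]

theorem reduce_quintupleTheta_mul : reduce quintupleTheta * j2 ^ 2 = j1 ^ 5 := by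
  simpa only [map_mul, map_pow, j1, j2] using congrArg reduce quintupleTheta_mul_J_two_sq

theorem euler_reduce_quintupleTheta :
    θ (reduce quintupleTheta) = (4 * E4 ^ 2 + E4Two ^ 2 - 5) * reduce quintupleTheta := by
  have h := congrArg θ reduce_quintupleTheta_mul
  rw [euler_mul, euler_pow, euler_pow, euler_j1, euler_j2_eq_E4Two] at h
  have := reduce_quintupleTheta_mul
  refine (isUnit_j2.pow 2).mul_left_cancel ?_
  grind

theorem isUnit_reduce_quintupleTheta : IsUnit (reduce quintupleTheta) :=
  isUnit_of_mul_isUnit_left (reduce_quintupleTheta_mul ▸ isUnit_j1.pow 5)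

-- This is the Riccati equation of `J₁⁵ / J₂²`.
theorem E4_mul_E4Two_relation : (2 * E4Two ^ 2 - E4 ^ 2) * (2 * E4 - E4Two) = 1 := by
  have h := riccati_of_third_order θ isUnit_reduce_quintupleTheta euler_reduce_quintupleTheta
    (by rw [euler_third_order_quintupleTheta, zero_mul])
  simp only [map_add, map_sub, euler_mul, euler_pow, euler_ofNat, euler_E4, euler_E4Two,
    map_zero, Nat.cast_ofNat, Derivation.map_one_eq_zero] at h
  grind

/-- The Eisenstein series `2 E₂(q²) - E₂(q)` of weight 2 and level 2 modulo 7, written with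
`E₂ = E₄²`. All modular forms of level 2 occurring below are Laurent polynomials in it, because
the weight 6 Eisenstein series is congruent to 1 modulo 7. -/
def eis : (ZMod 7)⟦X⟧ := 2 * E4Two ^ 2 - E4 ^ 2

theorem constantCoeff_eis : constantCoeff eis = 1 := by
  simp only [eis, map_sub, map_mul, map_pow, map_ofNat, constantCoeff_E4, constantCoeff_E4Two]
  decide

theorem eis_mul_inv : eis * eis⁻¹ = 1 :=
  PowerSeries.mul_inv_cancel _ (by simp [constantCoeff_eis])

theorem inv_eis : eis⁻¹ = 2 * E4 - E4Two :=
  left_inv_eq_right_inv ((mul_comm _ _).trans eis_mul_inv) E4_mul_E4Two_relation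

theorem eis_sq : eis ^ 2 = 3 * E4 - 2 * E4Two := by
  have h := E4_mul_E4Two_relation
  rw [eis]
  grind

theorem E4_eq : E4 = 2 * eis⁻¹ - eis ^ 2 := by
  rw [inv_eis, eis_sq]
  ring

theorem E4Two_eq : E4Two = 3 * eis⁻¹ - 2 * eis ^ 2 := by
  rw [inv_eis, eis_sq]
  ring

theorem euler_eis : θ eis = eis⁻¹ - eis ^ 5 := by
  have h := eis_mul_inv
  have heuler : θ eis = 16 * E4Two * (1 - E4Two ^ 3) - 4 * E4 * (1 - E4 ^ 3) := by
    rw [eis, map_sub, euler_mul, euler_pow, euler_pow, euler_ofNat, euler_E4, euler_E4Two]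
    push_cast
    ring
  rw [heuler, E4_eq, E4Two_eq]
  grind

theorem delta1_eq : delta1 = (eis ^ 3 - 1) * (eis ^ 3 + 1) ^ 2 * eis⁻¹ ^ 3 := by
  have h := eis_mul_inv
  rw [delta1_eq_one_sub_E4_cube, E4_eq]
  grind

theorem delta2_eq : delta2 = (eis ^ 3 - 1) ^ 2 * (eis ^ 3 + 1) * eis⁻¹ ^ 3 := by
  have h := eis_mul_inv
  rw [delta2_eq_one_sub_E4Two_cube, E4Two_eq]
  grind

/-! ### The operator `U_m` -/

section UOperator

variable {R : Type*} [CommRing R] (m : ℕ)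

/-- The operator `U_m` on power series, `∑ aₙ qⁿ ↦ ∑ a_{mn} qⁿ`. -/
def U : R⟦X⟧ →ₗ[R] R⟦X⟧ where
  toFun f := mk fun n => coeff (m * n) f
  map_add' f g := by ext n; simp
  map_smul' c f := by ext n; simp

@[simp]
theorem coeff_U (f : R⟦X⟧) (n : ℕ) : coeff n (U m f) = coeff (m * n) f :=
  coeff_mk n fun n => coeff (m * n) f

theorem U_natCast_mul (k : ℕ) (f : R⟦X⟧) : U m ((k : R⟦X⟧) * f) = (k : R⟦X⟧) * U m f := by
  rw [← nsmul_eq_mul, map_nsmul, nsmul_eq_mul]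

theorem U_ofNat_mul (k : ℕ) [k.AtLeastTwo] (f : R⟦X⟧) :
    U m (ofNat(k) * f) = ofNat(k) * U m f :=
  U_natCast_mul m k f

theorem U_one (hm : m ≠ 0) : U m (1 : R⟦X⟧) = 1 := by
  ext n
  simp [coeff_one, hm]

theorem map_U {S : Type*} [CommRing S] (φ : R →+* S) (f : R⟦X⟧) :
    PowerSeries.map φ (U m f) = U m (PowerSeries.map φ f) := by
  ext n
  simp

variable {m}

theorem U_expand_mul (hm : m ≠ 0) (h f : R⟦X⟧) : U m (expand m hm h * f) = h * U m f := by
  have hinj : Function.Injective fun p : ℕ × ℕ => (m * p.1, m * p.2) := fun p p' hp => by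
    simpa [Prod.ext_iff, hm] using hp
  ext n
  rw [coeff_U, coeff_mul, coeff_mul]
  have hsub : (antidiagonal n).map ⟨_, hinj⟩ ⊆ antidiagonal (m * n) := fun p hp => by
    obtain ⟨p', hp', rfl⟩ := mem_map.1 hp
    simp [← mem_antidiagonal.1 hp', mul_add]
  rw [← sum_subset hsub, sum_map]
  · simp [coeff_expand, Nat.mul_div_cancel_left _ hm.bot_lt]
  · intro p hp hnot
    rw [coeff_expand, if_neg, zero_mul]
    rintro ⟨k, hk⟩
    have hsum := mem_antidiagonal.1 hp
    obtain ⟨l, hl⟩ : m ∣ p.2 := (Nat.dvd_add_right ⟨k, hk⟩).1 (hsum ▸ dvd_mul_right m n)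
    refine hnot (mem_map.2 ⟨(k, l), mem_antidiagonal.2 ?_, Prod.ext hk.symm hl.symm⟩)
    rw [hk, hl, ← mul_add] at hsum
    exact mul_left_cancel₀ hm hsum

theorem U_expand_of_coprime {k : ℕ} (hk : k ≠ 0) (hmk : k.Coprime m) (f : R⟦X⟧) :
    U m (expand k hk f) = expand k hk (U m f) := by
  ext n
  simp only [coeff_U, coeff_expand, hmk.dvd_mul_left]
  split_ifs with h
  · rw [Nat.mul_div_assoc m h]
  · rfl

theorem hasSum_U [TopologicalSpace R] {ι : Type*} {e : ι → ℕ}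
    {c : ι → R} {f : R⟦X⟧} (hm : m ≠ 0) (hf : HasSum (fun i => monomial (e i) (c i)) f) :
    HasSum (fun i => if m ∣ e i then monomial (e i / m) (c i) else 0) (U m f) := by
  rw [PowerSeries.WithPiTopology.hasSum_iff_hasSum_coeff] at *
  intro n
  rw [coeff_U]
  refine (hf (m * n)).congr_fun fun i => ?_
  rw [coeff_monomial]
  split_ifs with hdvd heq heq
  · rw [← heq, Nat.mul_div_cancel_left _ hm.bot_lt, coeff_monomial_same]
  · rw [coeff_monomial, if_neg fun h => heq (by rw [h, Nat.mul_div_cancel' hdvd])]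
  · exact absurd ⟨n, heq.symm⟩ hdvd
  · exact map_zero _

end UOperator

section UPrime

variable {p : ℕ} [hp : Fact p.Prime]

theorem U_pow_mul (h f : (ZMod p)⟦X⟧) : U p (h ^ p * f) = h * U p f := by
  rw [← expand_prime_eq_pow, U_expand_mul]

theorem U_pow (h : (ZMod p)⟦X⟧) : U p (h ^ p) = h := by
  rw [← mul_one (h ^ p), U_pow_mul, U_one p hp.out.ne_zero, mul_one]

theorem U_euler (f : (ZMod p)⟦X⟧) : U p (euler (ZMod p) f) = 0 := by
  ext n
  simp

theorem eq_zero_of_euler_eq_zero_of_U_eq_self {f : (ZMod p)⟦X⟧} (heuler : euler (ZMod p) f = 0)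
    (hU : U p f = f) (hconst : constantCoeff f = 0) : f = 0 := by
  ext n
  induction n using Nat.strong_induction_on with
  | _ n ih =>
    by_cases h : p ∣ n
    · obtain ⟨k, rfl⟩ := h
      rcases k.eq_zero_or_pos with rfl | hk
      · simpa using hconst
      · rw [← coeff_U, hU]
        exact ih k (lt_mul_left hk hp.out.one_lt)
    · have hcoeff := congrArg (coeff n) heuler
      rw [coeff_euler, map_zero, mul_eq_zero, ZMod.natCast_eq_zero_iff] at hcoeff
      rw [hcoeff.resolve_left h, map_zero]

end UPrime

theorem reduce_U (m : ℕ) (f : ℤ⟦X⟧) : reduce (U m f) = U m (reduce f) :=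
  map_U m _ f

-- `eisⁿ - eisⁿ⁺⁶` is a multiple of the derivative of `eisⁿ⁺²`.
theorem U_eis_pow_add_six {n : ℕ} (hn : ¬7 ∣ n + 2) : U 7 (eis ^ (n + 6)) = U 7 (eis ^ n) := by
  have hunit : ((n + 2 : ℕ) : ZMod 7) ≠ 0 := by rwa [Ne, ZMod.natCast_eq_zero_iff]
  have h := eis_mul_inv
  have heuler : θ (eis ^ (n + 2)) = ((n + 2 : ℕ) : ZMod 7) • (eis ^ n - eis ^ (n + 6)) := by
    rw [euler_pow, euler_eis, Nat.add_sub_assoc one_le_two, Nat.cast_smul_eq_nsmul, nsmul_eq_mul]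
    linear_combination ((n + 2 : ℕ) : (ZMod 7)⟦X⟧) * eis ^ n * h
  have hU := U_euler (eis ^ (n + 2))
  rw [heuler, map_smul, map_sub, smul_eq_zero_iff_right hunit] at hU
  exact (sub_eq_zero.1 hU).symm

theorem U_eis_pow {n : ℕ} (hn : n ≤ 4) : U 7 (eis ^ n) = eis ^ n := by
  have h : ∀ k ≤ n, U 7 (eis ^ (n + 6 * k)) = U 7 (eis ^ n) := fun k hk => by
    induction k with
    | zero => rfl
    | succ k ih => rw [mul_add_one, ← add_assoc, U_eis_pow_add_six (by omega), ih (by omega)]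
  rw [← h n le_rfl, show n + 6 * n = n * 7 by ring, pow_mul, U_pow (p := 7)]

theorem U_eis_pow_six : U 7 (eis ^ 6) = 1 := by
  rw [← zero_add 6, U_eis_pow_add_six (by norm_num), U_eis_pow (by norm_num), pow_zero]

theorem U_eis_pow_five : U 7 (eis ^ 5) = eis⁻¹ := by
  have h : eis ^ 5 = eis⁻¹ ^ 7 * eis ^ 6 - θ eis := by
    have hpow : eis⁻¹ ^ 7 * eis ^ 6 = (eis * eis⁻¹) ^ 6 * eis⁻¹ := by ring
    rw [euler_eis, hpow, eis_mul_inv]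
    ring
  rw [h, map_sub, U_euler (p := 7), sub_zero, U_pow_mul (p := 7), U_eis_pow_six, mul_one]

theorem U_eq_of_eq_sum_pow_mul_eis_pow {f : (ZMod 7)⟦X⟧} (x₀ x₁ x₂ x₃ x₄ x₅ x₆ : (ZMod 7)⟦X⟧)
    (h : f = x₀ ^ 7 + x₁ ^ 7 * eis + x₂ ^ 7 * eis ^ 2 + x₃ ^ 7 * eis ^ 3 + x₄ ^ 7 * eis ^ 4
        + x₅ ^ 7 * eis ^ 5 + x₆ ^ 7 * eis ^ 6) :
    U 7 f = x₀ + x₁ * eis + x₂ * eis ^ 2 + x₃ * eis ^ 3 + x₄ * eis ^ 4 + x₅ * eis⁻¹ + x₆ := by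
  have h₁ : U 7 eis = eis := by simpa only [pow_one] using U_eis_pow (n := 1) (by norm_num)
  simp only [h, map_add, U_pow_mul (p := 7), U_pow (p := 7), h₁, U_eis_pow_five, U_eis_pow_six,
    U_eis_pow (n := 2) (by norm_num), U_eis_pow (n := 3) (by norm_num),
    U_eis_pow (n := 4) (by norm_num), mul_one]

/-! ### `J₁⁷` modulo 49 -/

open scoped ArithmeticFunction.sigma

theorem ofNat_dvd_iff_forall_dvd_coeff (m : ℕ) [m.AtLeastTwo] (f : ℤ⟦X⟧) :
    (ofNat(m) : ℤ⟦X⟧) ∣ f ↔ ∀ n, (ofNat(m) : ℤ) ∣ coeff n f := by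
  rw [← map_ofNat (C (R := ℤ))]
  refine ⟨?_, fun h => ?_⟩
  · rintro ⟨g, rfl⟩ n
    exact ⟨coeff n g, coeff_C_mul ..⟩
  · choose c hc using h
    exact ⟨mk c, by ext n; rw [hc, coeff_C_mul, coeff_mk]⟩

theorem ofNat_dvd_of_forall_exists_X_pow_dvd_sub {m : ℕ} [m.AtLeastTwo] {f : ℤ⟦X⟧}
    (h : ∀ n, ∃ g, (ofNat(m) : ℤ⟦X⟧) ∣ g ∧ X ^ (n + 1) ∣ f - g) : (ofNat(m) : ℤ⟦X⟧) ∣ f := by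
  rw [ofNat_dvd_iff_forall_dvd_coeff]
  intro n
  obtain ⟨g, hg, hfg⟩ := h n
  have hcoeff := X_pow_dvd_iff.1 hfg n n.lt_succ_self
  rw [map_sub, sub_eq_zero] at hcoeff
  exact hcoeff ▸ (ofNat_dvd_iff_forall_dvd_coeff m g).1 hg n

theorem seven_dvd_iff_reduce_eq_zero (f : ℤ⟦X⟧) : 7 ∣ f ↔ reduce f = 0 := by
  rw [ofNat_dvd_iff_forall_dvd_coeff]
  simp [PowerSeries.ext_iff, reduce, ZMod.intCast_zmod_eq_zero_iff_dvd _ 7]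

theorem reduce_ofNat (n : ℕ) [n.AtLeastTwo] : reduce (ofNat(n)) = ofNat(n) :=
  map_ofNat reduce n

theorem reduce_euler (f : ℤ⟦X⟧) : reduce (euler ℤ f) = θ (reduce f) :=
  map_euler _ f

theorem sq_dvd_prod_sub_of_forall_sq_dvd_sub {R : Type*} [CommRing R] {e : R} {x y a : ℕ → R}
    (h : ∀ k, e ^ 2 ∣ x k - y k * (1 - e * a k)) (n : ℕ) :
    e ^ 2 ∣ ∏ k ∈ range n, x k - (∏ k ∈ range n, y k) * (1 - e * ∑ k ∈ range n, a k) := by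
  induction n with
  | zero => simp
  | succ n ih =>
    obtain ⟨c, hc⟩ := h n
    obtain ⟨d, hd⟩ := ih
    rw [prod_range_succ, prod_range_succ, sum_range_succ]
    exact ⟨(∏ k ∈ range n, x k) * c + d * (y n * (1 - e * a n))
      + (∏ k ∈ range n, y k) * y n * (∑ k ∈ range n, a k) * a n, by
        linear_combination (∏ k ∈ range n, x k) * hc + y n * (1 - e * a n) * hd⟩

/-- The series `∑ d⁵ q^d`. Modulo 7 its coefficients are `1 / d`, so modulo 49 it is the logarithm
of `(1 - q⁷) / (1 - q)⁷`, divided by 7. -/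
def powSeries : ℤ⟦X⟧ := mk fun d => (d : ℤ) ^ 5

theorem one_sub_X_pow_seven_mul_reduce_powSeries :
    (1 - X ^ 7) * reduce powSeries
      = X - 3 * X ^ 2 + 5 * X ^ 3 - 5 * X ^ 4 + 3 * X ^ 5 - X ^ 6 := by
  have h3 : (3 : (ZMod 7)⟦X⟧) = C 3 := (map_ofNat _ 3).symm
  have h5 : (5 : (ZMod 7)⟦X⟧) = C 5 := (map_ofNat _ 5).symm
  rw [h3, h5]
  ext n
  rw [sub_mul, one_mul, map_sub, coeff_X_pow_mul']
  simp only [map_sub, map_add, coeff_C_mul, coeff_X_pow, coeff_X, powSeries, reduce, coeff_map,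
    coeff_mk]
  rcases lt_or_ge n 7 with hn | hn
  · interval_cases n <;> decide
  · obtain ⟨m, rfl⟩ := Nat.exists_eq_add_of_le hn
    have hm : ((7 + m : ℕ) : ZMod 7) = m := by rw [Nat.cast_add, ZMod.natCast_self, zero_add]
    simp only [Int.coe_castRingHom, Int.cast_pow, Int.cast_natCast, hm, hn, if_true,
      Nat.add_sub_cancel_left, sub_self]
    have hne : ∀ k < 7, 7 + m ≠ k := by omega
    simp [hne]

theorem dvd_one_sub_X_pow_seven_sub :
    (7 : ℤ⟦X⟧) ^ 2 ∣ (1 - X) ^ 7 - (1 - X ^ 7) * (1 - 7 * powSeries) := by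
  obtain ⟨h, hh⟩ := (seven_dvd_iff_reduce_eq_zero ((1 - X ^ 7) * powSeries
      - (X - 3 * X ^ 2 + 5 * X ^ 3 - 5 * X ^ 4 + 3 * X ^ 5 - X ^ 6))).2 <| by
    simp only [map_sub, map_add, map_mul, map_one, map_pow, reduce_X, reduce_ofNat,
      one_sub_X_pow_seven_mul_reduce_powSeries, sub_self]
  exact ⟨h, by linear_combination 7 * hh⟩

theorem dvd_one_sub_X_pow_pow_seven_sub {k : ℕ} (hk : k ≠ 0) :
    (7 : ℤ⟦X⟧) ^ 2 ∣ (1 - X ^ k) ^ 7 - (1 - (X ^ 7) ^ k) * (1 - 7 * expand k hk powSeries) := by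
  have h7 : expand k hk (7 : ℤ⟦X⟧) = 7 := map_ofNat _ 7
  have h := map_dvd (expand k hk) dvd_one_sub_X_pow_seven_sub
  simp only [map_mul, map_sub, map_pow, map_one, expand_X, h7] at h
  rwa [pow_right_comm X 7 k]

/-- The generating series `∑ σ₅(n) qⁿ` of the divisor power sums. -/
def sigmaSeries : ℤ⟦X⟧ := mk fun n => (σ 5 n : ℤ)

theorem X_pow_dvd_sigmaSeries_sub (n : ℕ) :
    X ^ (n + 1) ∣ sigmaSeries - ∑ k ∈ range n, expand (k + 1) k.succ_ne_zero powSeries := by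
  rw [X_pow_dvd_iff]
  intro d hd
  rw [map_sub, sub_eq_zero, map_sum, sigmaSeries, coeff_mk]
  rcases d.eq_zero_or_pos with rfl | hd0
  · simp [coeff_expand, powSeries]
  have hdiv : d.divisors = ((range n).filter fun k => k + 1 ∣ d).map ⟨_, Nat.succ_injective⟩ := by
    ext c
    simp only [Nat.mem_divisors, mem_map, mem_filter, mem_range, Function.Embedding.coeFn_mk]
    constructor
    · rintro ⟨hc, -⟩
      have := Nat.le_of_dvd hd0 hc
      have := Nat.pos_of_dvd_of_pos hc hd0
      exact ⟨c - 1, ⟨by omega, by rwa [Nat.sub_add_cancel this]⟩, by omega⟩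
    · rintro ⟨k, ⟨-, hk⟩, rfl⟩
      exact ⟨hk, hd0.ne'⟩
  rw [ArithmeticFunction.sigma_eq_sum_div, hdiv, sum_map, sum_filter]
  simp [coeff_expand, powSeries]

theorem dvd_J_one_pow_seven_sub :
    (49 : ℤ⟦X⟧) ∣ J 1 ^ 7 - J 7 * (1 - 7 * sigmaSeries) := by
  refine ofNat_dvd_of_forall_exists_X_pow_dvd_sub fun n =>
    ⟨qPochhammer (X ^ 1) n ^ 7 - qPochhammer (X ^ 7) n *
      (1 - 7 * ∑ k ∈ range n, expand (k + 1) k.succ_ne_zero powSeries), ?_, ?_⟩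
  · have h := sq_dvd_prod_sub_of_forall_sq_dvd_sub
      (fun k => dvd_one_sub_X_pow_pow_seven_sub k.succ_ne_zero) n
    rw [prod_pow] at h
    convert h using 1
    · norm_num
    · simp [qPochhammer]
  · have h₁ := (X_pow_dvd_J_sub_qPochhammer one_ne_zero n.le_refl).trans
      (sub_dvd_pow_sub_pow _ _ 7)
    have h₇ := X_pow_dvd_J_sub_qPochhammer (b := 7) (by norm_num) n.le_refl
    have hσ := X_pow_dvd_sigmaSeries_sub n
    convert (h₁.sub (h₇.mul_right (1 - 7 * sigmaSeries))).add
      (hσ.mul_left (7 * qPochhammer (X ^ 7) n)) using 1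
    ring

theorem dvd_J_two_pow_seven_sub :
    (49 : ℤ⟦X⟧) ∣ J 2 ^ 7 - J 14 * (1 - 7 * expand 2 two_ne_zero sigmaSeries) := by
  have h := map_dvd (expand 2 two_ne_zero) dvd_J_one_pow_seven_sub
  have h7 : expand 2 two_ne_zero (7 : ℤ⟦X⟧) = 7 := map_ofNat _ 7
  have h49 : expand 2 two_ne_zero (49 : ℤ⟦X⟧) = 49 := map_ofNat _ 49
  rwa [map_sub, map_mul, map_sub, map_mul, map_pow, map_one, h7, h49, expand_J one_ne_zero,
    expand_J (by norm_num), mul_one] at h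

theorem natCast_sigma_prime_mul {k p : ℕ} (hk : k ≠ 0) (hp : p.Prime) (n : ℕ) :
    (σ k (p * n) : ZMod p) = σ k n := by
  rcases n.eq_zero_or_pos with rfl | hn
  · simp
  simp only [ArithmeticFunction.sigma_apply, Nat.cast_sum, Nat.cast_pow]
  symm
  have hsub := Nat.divisors_subset_of_dvd (mul_pos hp.pos hn).ne' (dvd_mul_left n p)
  refine sum_subset hsub fun d hd hdn => ?_
  have hpd : p ∣ d := by
    by_contra hpd
    have hcop := ((Nat.Prime.coprime_iff_not_dvd hp).2 hpd).symm
    exact hdn (Nat.mem_divisors.2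
      ⟨hcop.dvd_of_dvd_mul_left (Nat.dvd_of_mem_divisors hd), hn.ne'⟩)
  rw [(ZMod.natCast_eq_zero_iff d p).2 hpd, zero_pow hk]

/-- The reduction of `∑ σ₅(n) qⁿ` modulo 7. -/
def sigma1 : (ZMod 7)⟦X⟧ := reduce sigmaSeries

/-- The reduction of `∑ σ₅(n) q²ⁿ` modulo 7. -/
def sigma2 : (ZMod 7)⟦X⟧ := expand 2 two_ne_zero sigma1

theorem U_sigma1 : U 7 sigma1 = sigma1 := by
  ext n
  simpa [sigma1, reduce, sigmaSeries] using
    natCast_sigma_prime_mul (k := 5) (by norm_num) (p := 7) (by norm_num) n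

theorem U_sigma2 : U 7 sigma2 = sigma2 := by
  rw [sigma2, U_expand_of_coprime _ (by norm_num), U_sigma1]

theorem reduce_expand_seven (f : ℤ⟦X⟧) :
    reduce (expand 7 (by norm_num) f) = reduce f ^ 7 := by
  rw [reduce_expand, expand_prime_eq_pow (p := 7)]

theorem euler_sigma1_mul : θ sigma1 * j1 ^ 7 = θ j1 ^ 7 - j1 ^ 6 * θ j1 := by
  obtain ⟨h, hh⟩ := dvd_J_one_pow_seven_sub
  have hJ : J 7 = expand 7 (by norm_num) (J 1) := by
    rw [expand_J one_ne_zero, mul_one]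
  have heuler := congrArg (euler ℤ) hh
  rw [hJ] at heuler
  simp only [map_sub, euler_mul, euler_pow, euler_ofNat, euler_expand,
    Derivation.map_one_eq_zero] at heuler
  have hcancel : J 1 ^ 6 * euler ℤ (J 1)
      = expand 7 (by norm_num) (euler ℤ (J 1)) * (1 - 7 * sigmaSeries)
        - expand 7 (by norm_num) (J 1) * euler ℤ sigmaSeries + 7 * euler ℤ h := by
    refine mul_left_cancel₀ (OfNat.ofNat_ne_zero 7) ?_
    push_cast at heuler
    linear_combination heuler
  have hmod := congrArg reduce hcancel
  have h7 : (7 : (ZMod 7)⟦X⟧) = 0 := CharP.cast_eq_zero _ 7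
  simp only [map_mul, map_add, map_sub, map_pow, map_one, reduce_ofNat, h7, reduce_expand_seven,
    reduce_euler] at hmod
  rw [← j1, ← sigma1] at hmod
  linear_combination hmod

theorem euler_sigma1 : θ sigma1 = 5 * (E4 ^ 14 - E4 ^ 2) := by
  refine (isUnit_j1.pow 7).mul_right_cancel ?_
  rw [euler_sigma1_mul, euler_j1]
  grind

theorem euler_sigma2 : θ sigma2 = 3 * (E4Two ^ 14 - E4Two ^ 2) := by
  rw [sigma2, euler_expand, euler_sigma1, E4Two]
  simp only [map_mul, map_sub, map_pow, map_ofNat]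
  grind

theorem constantCoeff_sigma1 : constantCoeff sigma1 = 0 := by
  simp [sigma1, constantCoeff_reduce, sigmaSeries]

theorem sigma1_sub_sigma2 : sigma1 - sigma2 = 4 * (eis ^ 3 - 1) := by
  rw [← sub_eq_zero]
  refine eq_zero_of_euler_eq_zero_of_U_eq_self (p := 7) ?_ ?_ ?_
  · have hE : E4 ^ 2 - 2 * E4Two ^ 2 = -eis := by rw [eis]; ring
    have : E4 ^ 14 - 2 * E4Two ^ 14 = -eis ^ 7 := by grind
    simp only [map_sub, euler_mul, euler_pow, euler_ofNat, Derivation.map_one_eq_zero,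
      euler_sigma1, euler_sigma2, euler_eis]
    have := eis_mul_inv
    grind
  · rw [map_sub, map_sub, U_sigma1, U_sigma2, U_ofNat_mul, map_sub, U_one _ (by norm_num),
      U_eis_pow (by norm_num)]
  · simp [sigma2, constantCoeff_expand, constantCoeff_sigma1, constantCoeff_eis]

/-! ### `U₇` on Laurent polynomials in the Eisenstein series -/

theorem inv_eis_pow_mul_eis_pow (n : ℕ) : eis⁻¹ ^ n * eis ^ n = 1 := by
  rw [← mul_pow, mul_comm, eis_mul_inv, one_pow]

/-- The reduction of the factor `A₅` of the tower modulo 7, as a Laurent polynomial in `eis`. -/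
def factorMod : (ZMod 7)⟦X⟧ := (eis ^ 3 - 1) ^ 12 * (eis ^ 3 + 1) ^ 54 * eis⁻¹ ^ 66

/-- The reduction of `(p₀ + p₁) t³` modulo 7, as a Laurent polynomial in `eis`. -/
def oddMod : (ZMod 7)⟦X⟧ := 4 * (eis ^ 3 + 1) ^ 8 * (eis ^ 3 - 1) ^ 2 * eis⁻¹ ^ 9

/-- The reduction of `L₁ / 7` modulo 7, as a Laurent polynomial in `eis`. -/
def firstMod : (ZMod 7)⟦X⟧ := 3 * (eis ^ 3 + 1) ^ 8 * (eis ^ 3 - 1) ^ 4 * eis⁻¹ ^ 12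

theorem U_factorMod_mul_delta1 : U 7 (factorMod * delta1) = 6 * oddMod := by
  have hsplit : factorMod * delta1
      = ((eis ^ 3 - 1) * (eis ^ 3 + 1) ^ 8 * eis⁻¹ ^ 12) ^ 7 * ((eis ^ 3 - 1) ^ 6 * eis ^ 15) := by
    rw [delta1_eq, factorMod]
    linear_combination
      (-(eis ^ 3 - 1) ^ 13 * (eis ^ 3 + 1) ^ 56 * eis⁻¹ ^ 69) * inv_eis_pow_mul_eis_pow 15
  have hU : U 7 ((eis ^ 3 - 1) ^ 6 * eis ^ 15) = 3 * eis ^ 3 * (eis ^ 3 - 1) := by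
    rw [U_eq_of_eq_sum_pow_mul_eis_pow (eis ^ 3) (eis ^ 2) (eis ^ 4) (eis ^ 3) (eis ^ 2) (eis ^ 4)
      (eis ^ 3) (by grind)]
    have := eis_mul_inv
    grind
  rw [hsplit, U_pow_mul (p := 7), hU, oddMod]
  have := inv_eis_pow_mul_eis_pow 3
  grind

theorem U_oddMod : U 7 oddMod = 3 * delta1 := by
  have hsplit : oddMod = ((eis ^ 3 + 1) * eis⁻¹ ^ 3) ^ 7
      * (4 * eis ^ 12 * (eis ^ 3 + 1) * (eis ^ 3 - 1) ^ 2) := by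
    rw [oddMod]
    linear_combination (-4 * (eis ^ 3 + 1) ^ 8 * (eis ^ 3 - 1) ^ 2 * eis⁻¹ ^ 9)
      * inv_eis_pow_mul_eis_pow 12
  have hU : U 7 (4 * eis ^ 12 * (eis ^ 3 + 1) * (eis ^ 3 - 1) ^ 2) = 3 * (eis ^ 6 - 1) := by
    rw [U_eq_of_eq_sum_pow_mul_eis_pow (4 * eis ^ 3) (3 * eis ^ 2) 0 0 (3 * eis ^ 2) (4 * eis) 0
      (by grind)]
    have := eis_mul_inv
    grind
  rw [hsplit, U_pow_mul (p := 7), hU, delta1_eq]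
  ring

theorem U_firstMod : U 7 firstMod = 2 * delta1 := by
  have hsplit : firstMod = ((eis ^ 3 + 1) * eis⁻¹ ^ 2) ^ 7
      * (3 * eis ^ 2 * (eis ^ 3 + 1) * (eis ^ 3 - 1) ^ 4) := by
    rw [firstMod]
    linear_combination (-3 * (eis ^ 3 + 1) ^ 8 * (eis ^ 3 - 1) ^ 4 * eis⁻¹ ^ 12)
      * inv_eis_pow_mul_eis_pow 2
  rw [hsplit, U_pow_mul (p := 7), U_eq_of_eq_sum_pow_mul_eis_pow (5 * eis ^ 2) (6 * eis) 3
    (3 * eis ^ 2) (6 * eis) 5 0 (by grind), delta1_eq]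
  have := eis_mul_inv
  grind

/-- The combination of divisor sums that enters `A₅` modulo 49. -/
def sigmaComb : (ZMod 7)⟦X⟧ := 3 * sigma1 - sigma2

/-- The series `W` with `θ (3 σ₁ - σ₂) = W⁷ - W`. -/
def eulerRoot : (ZMod 7)⟦X⟧ := 5 * eis⁻¹ ^ 2 + 4 * eis + 3 * eis ^ 4

theorem eulerRoot_eq : eulerRoot = E4 ^ 2 + 4 * E4Two ^ 2 := by
  have := eis_mul_inv
  rw [eulerRoot, E4_eq, E4Two_eq]
  grind

theorem euler_sigmaComb : θ sigmaComb = eulerRoot ^ 7 - eulerRoot := by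
  have hfrob := add_pow_char (E4 ^ 2) (4 * E4Two ^ 2) 7
  rw [sigmaComb, map_sub, euler_mul, euler_ofNat, euler_sigma1, euler_sigma2, eulerRoot_eq, hfrob]
  grind

/-- A primitive of `(eis⁶ - 1)⁵ / eis³` with respect to the Euler derivation. -/
def eisPrimitive : (ZMod 7)⟦X⟧ :=
  eis⁻¹ + 5 * eis ^ 5 + 2 * eis ^ 11 + 6 * eis ^ 17 + 3 * eis ^ 23

theorem euler_inv_eis : θ eis⁻¹ = eis ^ 3 - eis⁻¹ ^ 3 := by
  have h := congrArg θ eis_mul_inv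
  rw [euler_mul, euler_eis, Derivation.map_one_eq_zero] at h
  linear_combination eis⁻¹ * h - θ eis⁻¹ * eis_mul_inv + eis ^ 3 * inv_eis_pow_mul_eis_pow 2

theorem euler_eisPrimitive : θ eisPrimitive = (eis ^ 6 - 1) ^ 5 * eis⁻¹ ^ 3 := by
  simp only [eisPrimitive, map_add, euler_mul, euler_pow, euler_eis, euler_inv_eis, euler_ofNat]
  push_cast
  have := eis_mul_inv
  grind

theorem U_eisPrimitive : U 7 eisPrimitive = 4 * eis ^ 5 + 6 * eis⁻¹ := by
  have hsplit : eisPrimitive = eis⁻¹ ^ 7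
      * (eis ^ 6 + 5 * eis ^ 12 + 2 * eis ^ 18 + 6 * eis ^ 24 + 3 * eis ^ 30) := by
    have := eis_mul_inv
    grind [eisPrimitive]
  rw [hsplit, U_pow_mul (p := 7), U_eq_of_eq_sum_pow_mul_eis_pow 0 0 (3 * eis ^ 4) (6 * eis ^ 3)
    (2 * eis ^ 2) (5 * eis) 1 (by grind)]
  have := eis_mul_inv
  grind

theorem U_eisPrimitive_mul_eulerRoot :
    U 7 (eisPrimitive * eulerRoot) = eis ^ 6 + 3 * eis ^ 3 + 4 := by
  have hsplit : eisPrimitive * eulerRoot = eis⁻¹ ^ 7 * (5 * eis ^ 4 + 4 * eis ^ 7 + 6 * eis ^ 13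
      + 4 * eis ^ 16 + eis ^ 19 + eis ^ 22 + 3 * eis ^ 25 + 5 * eis ^ 28 + 5 * eis ^ 31
      + 2 * eis ^ 34) := by
    rw [eisPrimitive, eulerRoot]
    have := eis_mul_inv
    grind
  rw [hsplit, U_pow_mul (p := 7), U_eq_of_eq_sum_pow_mul_eis_pow (4 * eis + 5 * eis ^ 4) (eis ^ 3)
    (4 * eis ^ 2) (5 * eis ^ 4) (5 + 3 * eis ^ 3) (eis ^ 2) (6 * eis + 2 * eis ^ 4)]
  · have := eis_mul_inv
    grind
  · rw [add_pow_char _ _ 7, add_pow_char _ _ 7, add_pow_char _ _ 7]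
    grind

-- `factorMod` is a seventh power times `θ eisPrimitive`; integrate by parts.
theorem U_factorMod_mul_sigmaComb :
    U 7 (factorMod * sigmaComb) = (eis ^ 3 - 1) * (eis ^ 3 + 1) ^ 7 * eis⁻¹ ^ 9
      * (eis ^ 6 + 3 * eis ^ 3 + 4 - eulerRoot * (4 * eis ^ 5 + 6 * eis⁻¹)) := by
  have hparts : factorMod * sigmaComb = ((eis ^ 3 - 1) * (eis ^ 3 + 1) ^ 7 * eis⁻¹ ^ 9) ^ 7
      * (θ (eisPrimitive * sigmaComb) - eulerRoot ^ 7 * eisPrimitive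
        + eisPrimitive * eulerRoot) := by
    rw [euler_mul, euler_eisPrimitive, euler_sigmaComb, factorMod]
    ring
  rw [hparts, U_pow_mul (p := 7), map_add, map_sub, U_euler (p := 7), U_pow_mul (p := 7),
    U_eisPrimitive, U_eisPrimitive_mul_eulerRoot]
  ring

theorem add_U_factorMod_mul_sigmaComb :
    (eis ^ 3 - 1) ^ 2 * (eis ^ 3 + 1) ^ 10 * eis⁻¹ ^ 12 + U 7 (factorMod * sigmaComb)
      = firstMod := by
  have hroot : eulerRoot * (4 * eis ^ 5 + 6 * eis⁻¹)
      = (5 + 4 * eis ^ 3 + 3 * eis ^ 6) * (4 * eis ^ 6 + 6) * eis⁻¹ ^ 3 := by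
    rw [eulerRoot]
    have := eis_mul_inv
    grind
  have h9 : eis⁻¹ ^ 9 = eis⁻¹ ^ 12 * eis ^ 3 := by
    linear_combination -eis⁻¹ ^ 9 * inv_eis_pow_mul_eis_pow 3
  have hpoly : (eis ^ 3 - 1) * (eis ^ 3 + 1) ^ 3 + eis ^ 3 * (eis ^ 6 + 3 * eis ^ 3 + 4)
      - (5 + 4 * eis ^ 3 + 3 * eis ^ 6) * (4 * eis ^ 6 + 6)
      = 3 * (eis ^ 3 + 1) * (eis ^ 3 - 1) ^ 3 := by
    grind
  rw [U_factorMod_mul_sigmaComb, hroot, firstMod, h9]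
  linear_combination (eis ^ 3 - 1) * (eis ^ 3 + 1) ^ 7 * eis⁻¹ ^ 12 * hpoly
    - (eis ^ 3 - 1) * (eis ^ 3 + 1) ^ 7 * eis⁻¹ ^ 12
      * (5 + 4 * eis ^ 3 + 3 * eis ^ 6) * (4 * eis ^ 6 + 6) * inv_eis_pow_mul_eis_pow 3

/-! ### Reductions of the eta quotients -/

theorem reduce_J_seven_mul {b : ℕ} (hb : b ≠ 0) : reduce (J (7 * b)) = reduce (J b) ^ 7 := by
  rw [← expand_J hb (by norm_num), reduce_expand_seven]

theorem reduce_J_one : reduce (J 1) = j1 := rfl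

theorem reduce_J_two : reduce (J 2) = j2 := rfl

theorem reduce_J_seven : reduce (J 7) = j1 ^ 7 := by
  simpa only [mul_one, reduce_J_one] using reduce_J_seven_mul one_ne_zero

theorem reduce_J_fourteen : reduce (J 14) = j2 ^ 7 := by
  simpa only [Nat.reduceMul, reduce_J_two] using reduce_J_seven_mul two_ne_zero

theorem reduce_J_fortyNine : reduce (J 49) = j1 ^ 49 := by
  have h := reduce_J_seven_mul (b := 7) (by norm_num)
  rwa [reduce_J_seven, ← pow_mul] at h

theorem reduce_J_ninetyEight : reduce (J 98) = j2 ^ 49 := by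
  have h := reduce_J_seven_mul (b := 14) (by norm_num)
  rwa [reduce_J_fourteen, ← pow_mul] at h

theorem delta2_ne_zero : delta2 ≠ 0 :=
  mul_ne_zero (pow_ne_zero _ X_ne_zero) (isUnit_j2.pow 24).ne_zero

theorem reduce_t {t : ℤ⟦X⟧} (ht : t * J 1 ^ 4 = X * J 7 ^ 4) : reduce t = delta1 := by
  have h := congrArg reduce ht
  simp only [map_mul, map_pow, reduce_J_one, reduce_J_seven, reduce_X] at h
  apply (isUnit_j1.pow 4).mul_right_cancel
  rw [h, delta1]
  ring

theorem reduce_p0 {p : ℤ⟦X⟧}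
    (hp : (1 + 7 * p) * (J 1 ^ 7 * J 14) = 8 * J 2 ^ 7 * J 7) :
    reduce p = 4 * (eis ^ 3 + 1) := by
  obtain ⟨k₁, hk₁⟩ := dvd_J_one_pow_seven_sub
  obtain ⟨k₂, hk₂⟩ := dvd_J_two_pow_seven_sub
  have hdiv : p * J 1 ^ 7 * J 14 = J 7 * J 14 * (1 + sigmaSeries
      - 8 * expand 2 two_ne_zero sigmaSeries) + 7 * (8 * k₂ * J 7 - k₁ * J 14) := by
    apply mul_left_cancel₀ (OfNat.ofNat_ne_zero 7 : (7 : ℤ⟦X⟧) ≠ 0)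
    linear_combination hp - J 14 * hk₁ + 8 * J 7 * hk₂
  have hred := congrArg reduce hdiv
  simp only [map_mul, map_add, map_sub, map_pow, map_one, reduce_ofNat, reduce_J_one,
    reduce_J_seven, reduce_J_fourteen, reduce_expand] at hred
  change _ = j1 ^ 7 * j2 ^ 7 * (1 + sigma1 - 8 * sigma2) + _ at hred
  apply ((isUnit_j1.pow 7).mul (isUnit_j2.pow 7)).mul_left_cancel
  have := sigma1_sub_sigma2
  grind

theorem exists_eq_p1_mul_t_cube {t : ℤ⟦X⟧} (ht : t * J 1 ^ 4 = X * J 7 ^ 4) :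
    ∃ s, s * (X * J 1 ^ 4 * J 14 ^ 4) = J 2 ^ 4 * J 7 ^ 4 * t ^ 3
      ∧ reduce s = (eis ^ 3 - 1) ^ 2 * (eis ^ 3 + 1) ^ 7 * eis⁻¹ ^ 9 := by
  have hJ1 (n : ℕ) : IsUnit (J 1 ^ n) := (isUnit_J one_ne_zero).pow n
  have hdenom : IsUnit (J 1 ^ 16 * J 14 ^ 4) := (hJ1 16).mul ((isUnit_J (by norm_num)).pow 4)
  set s := X ^ 2 * J 2 ^ 4 * J 7 ^ 16 * Ring.inverse (J 1 ^ 16 * J 14 ^ 4)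
  have hs : s * (J 1 ^ 16 * J 14 ^ 4) = X ^ 2 * J 2 ^ 4 * J 7 ^ 16 :=
    Ring.inverse_mul_cancel_right _ _ hdenom
  refine ⟨s, (hJ1 12).mul_right_cancel ?_, ?_⟩
  · calc _ = X * (s * (J 1 ^ 16 * J 14 ^ 4)) := by ring
      _ = J 2 ^ 4 * J 7 ^ 4 * (X * J 7 ^ 4) ^ 3 := by rw [hs]; ring
      _ = _ := by rw [← ht]; ring
  have hred := congrArg reduce hs
  simp only [map_mul, map_pow, reduce_J_one, reduce_J_two, reduce_J_seven, reduce_J_fourteen,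
    reduce_X] at hred
  have hdelta : reduce s * delta2 = delta1 ^ 4 := by
    apply ((isUnit_j1.pow 16).mul (isUnit_j2.pow 4)).mul_left_cancel
    rw [delta1, delta2]
    linear_combination X ^ 2 * hred
  apply mul_right_cancel₀ delta2_ne_zero
  rw [hdelta, delta1_eq, delta2_eq]
  ring

/-! ### The factor `A₅` modulo 7 and modulo 49 -/

/-- The factor `A₅ = q¹² J₂⁵ J₄₉¹⁶ / (J₁¹⁶ J₉₈⁵)` of the tower. -/
def towerFactor : ℤ⟦X⟧ := X ^ 12 * J 2 ^ 5 * J 49 ^ 16 * Ring.inverse (J 1 ^ 16 * J 98 ^ 5)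

theorem isUnit_towerFactor_denom : IsUnit (J 1 ^ 16 * J 98 ^ 5) :=
  ((isUnit_J one_ne_zero).pow 16).mul ((isUnit_J (by norm_num)).pow 5)

theorem towerFactor_mul :
    towerFactor * (J 1 ^ 16 * J 98 ^ 5) = X ^ 12 * J 2 ^ 5 * J 49 ^ 16 :=
  Ring.inverse_mul_cancel_right _ _ isUnit_towerFactor_denom

theorem reduce_towerFactor_mul : reduce towerFactor * j2 ^ 240 = X ^ 12 * j1 ^ 768 := by
  have h := congrArg reduce towerFactor_mul
  simp only [map_mul, map_pow, reduce_J_one, reduce_J_two, reduce_J_fortyNine,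
    reduce_J_ninetyEight, reduce_X] at h
  apply ((isUnit_j1.pow 16).mul (isUnit_j2.pow 5)).mul_left_cancel
  linear_combination h

theorem reduce_towerFactor : reduce towerFactor = factorMod := by
  have hdelta : reduce towerFactor * delta2 ^ 10 = delta1 ^ 32 := by
    rw [delta1, delta2]
    linear_combination X ^ 20 * reduce_towerFactor_mul
  apply mul_right_cancel₀ (pow_ne_zero 10 delta2_ne_zero)
  rw [hdelta, delta1_eq, delta2_eq, factorMod]
  ring

/-- The eta quotient `B = J₂ J₇¹⁶ / (J₁³ J₁₄⁵)`, for which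
`A₅ ≡ B(q⁷) · q¹² J₁⁵/J₂² · (1 + 7 (3 Σ(q) - Σ(q²)))` modulo 49. -/
def cofactor : ℤ⟦X⟧ := J 2 * J 7 ^ 16 * Ring.inverse (J 1 ^ 3 * J 14 ^ 5)

theorem cofactor_mul : cofactor * (J 1 ^ 3 * J 14 ^ 5) = J 2 * J 7 ^ 16 :=
  Ring.inverse_mul_cancel_right _ _
    (((isUnit_J one_ne_zero).pow 3).mul ((isUnit_J (by norm_num)).pow 5))

theorem expand_seven_cofactor_mul :
    expand 7 (by norm_num) cofactor * (J 7 ^ 3 * J 98 ^ 5) = J 14 * J 49 ^ 16 := by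
  have h := congrArg (expand 7 (by norm_num)) cofactor_mul
  rw [map_mul, map_mul, map_mul, map_pow, map_pow, map_pow, expand_J one_ne_zero,
    expand_J two_ne_zero, expand_J (b := 7) (by norm_num), expand_J (b := 14) (by norm_num)] at h
  simpa only [Nat.reduceMul] using h

theorem dvd_towerFactor_sub :
    (49 : ℤ⟦X⟧) ∣ towerFactor - expand 7 (by norm_num) cofactor * (X ^ 12 * quintupleTheta
      * (1 + 7 * (3 * sigmaSeries - expand 2 two_ne_zero sigmaSeries))) := by
  obtain ⟨k₁, hk₁⟩ := dvd_J_one_pow_seven_sub.trans (sub_dvd_pow_sub_pow _ _ 3)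
  obtain ⟨k₂, hk₂⟩ := dvd_J_two_pow_seven_sub
  have hunit : IsUnit (J 1 ^ 21 * J 98 ^ 5) :=
    ((isUnit_J one_ne_zero).pow 21).mul ((isUnit_J (by norm_num)).pow 5)
  have hfactor : towerFactor * (J 1 ^ 21 * J 98 ^ 5)
      = X ^ 12 * quintupleTheta * J 2 ^ 7 * J 49 ^ 16 := by
    linear_combination J 1 ^ 5 * towerFactor_mul
      - X ^ 12 * J 2 ^ 5 * J 49 ^ 16 * quintupleTheta_mul_J_two_sq
  have hcofactor := expand_seven_cofactor_mul
  rw [← hunit.dvd_mul_right, sub_mul, hfactor]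
  generalize expand 7 _ cofactor = B at *
  generalize expand 2 _ sigmaSeries = S₂ at *
  generalize sigmaSeries = S at *
  refine ⟨X ^ 12 * quintupleTheta * (J 49 ^ 16 * k₂ - B * (1 + 7 * (3 * S - S₂)) * J 98 ^ 5 * k₁
    + J 14 * J 49 ^ 16 * (6 * S ^ 2 - 56 * S ^ 3 + 147 * S ^ 4 - 3 * S * S₂ + 21 * S ^ 2 * S₂
      - 49 * S ^ 3 * S₂)), ?_⟩
  linear_combination X ^ 12 * quintupleTheta * (J 49 ^ 16 * hk₂
    - B * (1 + 7 * (3 * S - S₂)) * J 98 ^ 5 * hk₁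
    - (1 + 7 * (3 * S - S₂)) * (1 - 7 * S) ^ 3 * hcofactor)

theorem reduce_cofactor_mul : reduce cofactor * j2 ^ 34 = j1 ^ 109 := by
  have h := congrArg reduce cofactor_mul
  simp only [map_mul, map_pow, reduce_J_one, reduce_J_two, reduce_J_seven,
    reduce_J_fourteen] at h
  apply ((isUnit_j1.pow 3).mul isUnit_j2).mul_left_cancel
  linear_combination h

theorem reduce_cofactor_mul_quintupleTheta_pow :
    reduce cofactor * (X ^ 2 * reduce quintupleTheta ^ 7)
      = (eis ^ 3 - 1) ^ 2 * (eis ^ 3 + 1) ^ 10 * eis⁻¹ ^ 12 := by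
  have hdelta : reduce cofactor * (X ^ 2 * reduce quintupleTheta ^ 7) * delta2 ^ 2
      = delta1 ^ 6 := by
    calc _ = X ^ 6 * (reduce cofactor * j2 ^ 34) * (reduce quintupleTheta * j2 ^ 2) ^ 7 := by
          rw [delta2]; ring
      _ = _ := by rw [reduce_cofactor_mul, reduce_quintupleTheta_mul, delta1]; ring
  apply mul_right_cancel₀ (pow_ne_zero 2 delta2_ne_zero)
  rw [hdelta, delta1_eq, delta2_eq]
  ring

theorem reduce_cofactor_pow_mul_quintupleTheta :
    reduce cofactor ^ 7 * (X ^ 12 * reduce quintupleTheta) = factorMod := by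
  apply (isUnit_j2.pow 240).mul_right_cancel
  calc _ = X ^ 12 * (reduce cofactor * j2 ^ 34) ^ 7 * (reduce quintupleTheta * j2 ^ 2) := by ring
    _ = X ^ 12 * j1 ^ 768 := by rw [reduce_cofactor_mul, reduce_quintupleTheta_mul]; ring
    _ = _ := by rw [← reduce_towerFactor_mul, reduce_towerFactor]

/-! ### The first step of the tower -/

theorem seven_dvd_twelve_add_pentagonal_iff {n : ℤ} :
    7 ∣ 12 + pentagonal n ↔ ∃ k, 7 * k - 1 = n := by
  refine ⟨fun ⟨m, hm⟩ => ?_, fun ⟨k, hk⟩ => ?_⟩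
  · have hpent := two_mul_natCast_pentagonal n
    have hm' : (12 + pentagonal n : ℤ) = 7 * m := by exact_mod_cast hm
    have hdvd : (7 : ℤ) ∣ 6 * n - 1 := by
      refine (Int.prime_iff_natAbs_prime.2 (by norm_num)).dvd_of_dvd_pow (n := 2)
        ⟨24 * m - 41, ?_⟩
      linear_combination -12 * hpent + 24 * hm'
    exact ⟨(n + 1) / 7, by omega⟩
  · rw [← hk, pentagonal_seven_mul_sub_one]
    omega

theorem U_X_pow_twelve_mul_quintupleTheta :
    U 7 (X ^ 12 * quintupleTheta) = 7 * (X ^ 2 * expand 7 (by norm_num) quintupleTheta) := by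
  have hshift : HasSum (fun n : ℤ => monomial (12 + pentagonal n) (1 - 6 * n))
      (X ^ 12 * quintupleTheta) :=
    (hasSum_quintupleTheta.mul_left (X ^ 12)).congr_fun fun n => by
      rw [monomial_eq_intCast_mul, monomial_eq_intCast_mul, pow_add]
      ring
  refine (hasSum_U (by norm_num) hshift).unique ?_
  have hinj : Function.Injective fun k : ℤ => 7 * k - 1 := fun a b h => by
    simp only at h
    omega
  rw [← hinj.hasSum_iff]
  · rw [← mul_assoc]
    refine ((hasSum_expand_monomial (k := 7) (by norm_num)
      hasSum_quintupleTheta).mul_left (7 * X ^ 2)).congr_fun fun k => ?_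
    have hdiv : (12 + (2 + 49 * pentagonal k)) / 7 = 2 + 7 * pentagonal k := by omega
    rw [Function.comp, if_pos (seven_dvd_twelve_add_pentagonal_iff.2 ⟨k, rfl⟩),
      pentagonal_seven_mul_sub_one, hdiv, monomial_eq_intCast_mul, monomial_eq_intCast_mul, pow_add]
    push_cast
    ring
  · intro n hn
    rw [if_neg fun h => hn (seven_dvd_twelve_add_pentagonal_iff.1 h)]

theorem exists_U_towerFactor_eq_seven_mul :
    ∃ m, U 7 towerFactor = 7 * m ∧ reduce m = firstMod := by
  obtain ⟨k, hk⟩ := dvd_towerFactor_sub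
  set c := 3 * sigmaSeries - expand 2 two_ne_zero sigmaSeries with hc
  have hexpand : towerFactor = expand 7 (by norm_num) cofactor * (X ^ 12 * quintupleTheta)
      + 7 * (expand 7 (by norm_num) cofactor * (X ^ 12 * quintupleTheta * c)) + 49 * k := by
    linear_combination hk
  have hreduce : reduce c = sigmaComb := by
    rw [hc, map_sub, map_mul, reduce_ofNat, reduce_expand]
    rfl
  refine ⟨cofactor * (X ^ 2 * expand 7 (by norm_num) quintupleTheta)
    + cofactor * U 7 (X ^ 12 * quintupleTheta * c) + 7 * U 7 k, ?_, ?_⟩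
  · rw [hexpand, map_add, map_add, U_ofNat_mul, U_ofNat_mul, U_expand_mul, U_expand_mul,
      U_X_pow_twelve_mul_quintupleTheta]
    ring
  · simp only [map_add, map_mul, map_pow, reduce_X, reduce_expand_seven, reduce_U, hreduce,
      reduce_ofNat]
    rw [reduce_cofactor_mul_quintupleTheta_pow, ← U_pow_mul (p := 7), ← mul_assoc,
      reduce_cofactor_pow_mul_quintupleTheta, add_U_factorMod_mul_sigmaComb]
    grind

/-! ### The tower -/

theorem reduce_U_towerFactor_mul {m : ℤ⟦X⟧} {c : ℕ} (hm : reduce m = c * delta1) :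
    reduce (U 7 (towerFactor * m)) = 6 * c * oddMod := by
  rw [reduce_U, map_mul, reduce_towerFactor, hm, mul_left_comm, U_natCast_mul,
    U_factorMod_mul_delta1]
  ring

theorem reduce_U_U_towerFactor_mul {m : ℤ⟦X⟧} {c : ℕ} (hm : reduce m = c * delta1) :
    reduce (U 7 (U 7 (towerFactor * m))) = 4 * c * delta1 := by
  rw [reduce_U, reduce_U_towerFactor_mul hm, mul_assoc, U_ofNat_mul, U_natCast_mul, U_oddMod]
  grind

/-- The embedding of power series into Laurent series. -/
abbrev toLaurent : ℤ⟦X⟧ →+* LaurentSeries ℤ := HahnSeries.ofPowerSeries ℤ ℤ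

theorem modEq_coeff_toLaurent_seven_mul {f g : ℤ⟦X⟧} {c : ℤ} (h : reduce f = c * reduce g)
    (n : ℤ) :
    (toLaurent (7 * f)).coeff n ≡ (((c * 7 : ℤ) : LaurentSeries ℤ) * toLaurent g).coeff n
      [ZMOD 49] := by
  have hdvd : (49 : ℤ⟦X⟧) ∣ (c * 7 : ℤ) * g - 7 * f := by
    rw [show ((c * 7 : ℤ) : ℤ⟦X⟧) * g - 7 * f = 7 * (c * g - f) by push_cast; ring,
      show (49 : ℤ⟦X⟧) = 7 * 7 by norm_num]
    refine mul_dvd_mul_left 7 ((seven_dvd_iff_reduce_eq_zero _).2 ?_)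
    rw [map_sub, map_mul, map_intCast, h, sub_self]
  rw [← map_intCast toLaurent, ← map_mul, coeff_coe, coeff_coe]
  split_ifs
  · rfl
  · rw [Int.modEq_iff_dvd, ← map_sub]
    exact (ofNat_dvd_iff_forall_dvd_coeff 49 _).1 hdvd _

theorem apply_toLaurent {T : LaurentSeries ℤ → LaurentSeries ℤ}
    (hT : ∀ f n, (T f).coeff n = f.coeff (7 * n)) (f : ℤ⟦X⟧) :
    T (toLaurent f) = toLaurent (U 7 f) := by
  ext n
  rw [hT, coeff_coe, coeff_coe, coeff_U, Int.natAbs_mul]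
  congr 1
  simp only [eq_iff_iff]
  omega

theorem eq_toLaurent_towerFactor {A : LaurentSeries ℤ}
    (hA : A * toLaurent (J 1 ^ 16 * J 98 ^ 5) = toLaurent (X ^ 12 * J 2 ^ 5 * J 49 ^ 16)) :
    A = toLaurent towerFactor := by
  apply (isUnit_towerFactor_denom.map toLaurent).mul_right_cancel
  rw [hA, ← map_mul, towerFactor_mul]

theorem exists_add_mul_pow_eq_toLaurent {t p₀ : ℤ⟦X⟧} {p₁ : LaurentSeries ℤ}
    (ht : t * J 1 ^ 4 = X * J 7 ^ 4)
    (hp₀ : (1 + 7 * p₀) * (J 1 ^ 7 * J 14) = 8 * J 2 ^ 7 * J 7)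
    (hp₁ : p₁ * toLaurent (X * J 1 ^ 4 * J 14 ^ 4) = toLaurent (J 2 ^ 4 * J 7 ^ 4)) :
    ∃ s, (toLaurent p₀ + p₁) * toLaurent t ^ 3 = toLaurent s ∧ reduce s = oddMod := by
  obtain ⟨s, hs, hreduce⟩ := exists_eq_p1_mul_t_cube ht
  have hp₁s : p₁ * toLaurent t ^ 3 = toLaurent s := by
    have hne : toLaurent (X * J 1 ^ 4 * J 14 ^ 4) ≠ 0 := by
      rw [map_ne_zero_iff _ HahnSeries.ofPowerSeries_injective]
      exact mul_ne_zero (mul_ne_zero X_ne_zero ((isUnit_J one_ne_zero).pow 4).ne_zero)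
        ((isUnit_J (by norm_num)).pow 4).ne_zero
    apply mul_right_cancel₀ hne
    rw [mul_right_comm, hp₁, ← map_pow, ← map_mul, ← map_mul, hs]
  refine ⟨p₀ * t ^ 3 + s, ?_, ?_⟩
  · rw [add_mul, hp₁s, map_add, map_mul, map_pow]
  · rw [map_add, map_mul, map_pow, reduce_t ht, reduce_p0 hp₀, hreduce, delta1_eq, oddMod]
    grind

/-- `L` is the tower that starts at `1` and alternates multiplication by `A₅` followed by `T` with
`T` alone, where `T` is the operator `U₇` on Laurent series. -/
structure IsTower (T : LaurentSeries ℤ → LaurentSeries ℤ) (L : ℕ → LaurentSeries ℤ) : Prop where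
  coeff_apply : ∀ f n, (T f).coeff n = f.coeff (7 * n)
  zero : L 0 = 1
  odd : ∀ β, L (2 * β + 1) = T (toLaurent towerFactor * L (2 * β))
  even : ∀ β, L (2 * β + 2) = T (L (2 * β + 1))

namespace IsTower

variable {T : LaurentSeries ℤ → LaurentSeries ℤ} {L : ℕ → LaurentSeries ℤ}

theorem odd_eq_toLaurent (h : IsTower T L) {β : ℕ} {f : ℤ⟦X⟧} (hf : L (2 * β) = toLaurent f) :
    L (2 * β + 1) = toLaurent (U 7 (towerFactor * f)) := by
  rw [h.odd, hf, ← map_mul, apply_toLaurent h.coeff_apply]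

theorem even_eq_toLaurent (h : IsTower T L) {β : ℕ} {f : ℤ⟦X⟧} (hf : L (2 * β) = toLaurent f) :
    L (2 * (β + 1)) = toLaurent (U 7 (U 7 (towerFactor * f))) := by
  rw [mul_add_one, h.even, h.odd_eq_toLaurent hf, apply_toLaurent h.coeff_apply]

theorem exists_even_eq_seven_mul (h : IsTower T L) (β : ℕ) :
    ∃ m, L (2 * (β + 1)) = toLaurent (7 * m) ∧ reduce m = (2 ^ (2 * β + 1) : ℕ) * delta1 := by
  induction β with
  | zero =>
    obtain ⟨m, hm, hreduce⟩ := exists_U_towerFactor_eq_seven_mul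
    refine ⟨U 7 m, ?_, ?_⟩
    · rw [h.even_eq_toLaurent (f := 1) (by rw [mul_zero, h.zero, map_one]), mul_one, hm,
        U_ofNat_mul]
    · rw [reduce_U, hreduce, U_firstMod]
      norm_num
  | succ β ih =>
    obtain ⟨m, hm, hreduce⟩ := ih
    refine ⟨U 7 (U 7 (towerFactor * m)), ?_, ?_⟩
    · rw [h.even_eq_toLaurent hm, mul_left_comm, U_ofNat_mul, U_ofNat_mul]
    · rw [reduce_U_U_towerFactor_mul hreduce]
      push_cast
      ring

theorem exists_odd_eq_seven_mul (h : IsTower T L) (β : ℕ) :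
    ∃ m, L (2 * (β + 1) + 1) = toLaurent (7 * m) ∧ reduce m = 2 ^ (2 * β) * 5 * oddMod := by
  obtain ⟨m, hm, hreduce⟩ := h.exists_even_eq_seven_mul β
  refine ⟨U 7 (towerFactor * m), ?_, ?_⟩
  · rw [h.odd_eq_toLaurent hm, mul_left_comm, U_ofNat_mul]
  · rw [reduce_U_towerFactor_mul hreduce]
    push_cast
    grind

end IsTower

end EtaTower

/-- in the d₅ tower, for every `α ≥ 1`:
`L_{2α} ≡ 2^{2α−1}·7·t (mod 49)` and `L_{2α+1} ≡ 2^{2α−2}·35·(p₀+p₁)·t³ (mod 49)`,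
coefficientwise (in particular those leading t-coefficients, `2^{2α−1}·7` and
`2^{2α−2}·35`, are not divisible by 49). Here `t = q·J_7^4/J_1^4`,
`p₀ = (8·J_2^7·J_7/(J_1^7·J_14) − 1)/7`, `p₁ = q⁻¹·J_2^4·J_7^4/(J_1^4·J_14^4)`. -/
theorem stmt19
    (t : PowerSeries ℤ) (ht : t * (J 1) ^ 4 = PowerSeries.X * (J 7) ^ 4)
    (p0 : PowerSeries ℤ)
    (hp0 : (1 + 7 * p0) * ((J 1) ^ 7 * J 14) = 8 * (J 2) ^ 7 * J 7)
    (p1 : LaurentSeries ℤ)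
    (hp1 : p1 * HahnSeries.ofPowerSeries ℤ ℤ (PowerSeries.X * (J 1) ^ 4 * (J 14) ^ 4)
        = HahnSeries.ofPowerSeries ℤ ℤ ((J 2) ^ 4 * (J 7) ^ 4))
    (U : LaurentSeries ℤ → LaurentSeries ℤ)
    (hU : ∀ (f : LaurentSeries ℤ) (n : ℤ), (U f).coeff n = f.coeff (7 * n))
    (A5 : LaurentSeries ℤ)
    (hA5 : A5 * HahnSeries.ofPowerSeries ℤ ℤ ((J 1) ^ 16 * (J 98) ^ 5)
        = HahnSeries.ofPowerSeries ℤ ℤ (PowerSeries.X ^ 12 * (J 2) ^ 5 * (J 49) ^ 16))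
    (L : ℕ → LaurentSeries ℤ) (hL0 : L 0 = 1)
    (hLodd : ∀ β : ℕ, L (2 * β + 1) = U (A5 * L (2 * β)))
    (hLeven : ∀ β : ℕ, L (2 * β + 2) = U (L (2 * β + 1)))
    (α : ℕ) (hα : 1 ≤ α) :
    (∀ n : ℤ, Int.ModEq 49 ((L (2 * α)).coeff n)
        ((((2 ^ (2 * α - 1) * 7 : ℤ) : LaurentSeries ℤ) *
            HahnSeries.ofPowerSeries ℤ ℤ t).coeff n))
    ∧ (∀ n : ℤ, Int.ModEq 49 ((L (2 * α + 1)).coeff n)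
        ((((2 ^ (2 * α - 2) * 35 : ℤ) : LaurentSeries ℤ) *
            ((HahnSeries.ofPowerSeries ℤ ℤ p0 + p1) *
              (HahnSeries.ofPowerSeries ℤ ℤ t) ^ 3)).coeff n)) := by
  open EtaTower in
  have htower : IsTower U L := ⟨hU, hL0, eq_toLaurent_towerFactor hA5 ▸ hLodd, hLeven⟩
  obtain ⟨s, hs, hreduce⟩ := exists_add_mul_pow_eq_toLaurent ht hp0 hp1
  obtain ⟨β, rfl⟩ : ∃ β, α = β + 1 := ⟨α - 1, by omega⟩
  rw [show 2 * (β + 1) - 1 = 2 * β + 1 by omega, show 2 * (β + 1) - 2 = 2 * β by omega, hs]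
  constructor
  · obtain ⟨m, hm, hreduce_m⟩ := htower.exists_even_eq_seven_mul β
    rw [hm]
    refine modEq_coeff_toLaurent_seven_mul ?_
    rw [hreduce_m, reduce_t ht]
    push_cast
    rfl
  · obtain ⟨m, hm, hreduce_m⟩ := htower.exists_odd_eq_seven_mul β
    rw [hm, show (2 ^ (2 * β) * 35 : ℤ) = 2 ^ (2 * β) * 5 * 7 by ring]
    refine modEq_coeff_toLaurent_seven_mul ?_
    rw [hreduce_m, hreduce]
    push_cast
    rfl
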